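/- With probability 1, there are infinitely many times t at which the simple random walk on ℤ has exactly three favorite sites, i.e. almost surely the set {t ∈ ℕ : #𝒦(t) = 3} is infinite. -/

import Mathlib

section FavPart1

open scoped ENNReal

namespace Fav3

/-- step of a letter -/
def sg (c : Bool) : ℤ := if c then 1 else -1

/-- final position of the path started at `s` with word `w` -/
def pos : ℤ → List Bool → ℤ
  | s, [] => s
  | s, c :: w => pos (s + sg c) w

/-- number of visits (start not counted) -/
def vis : ℤ → List Bool → ℤ → ℕ
  | _, [], _ => 0
  | s, c :: w, z => (if s + sg c = z then 1 else 0) + vis (s + sg c) w z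

/-- number of up departures -/
def up : ℤ → List Bool → ℤ → ℕ
  | _, [], _ => 0
  | s, c :: w, z => (if c = true ∧ s = z then 1 else 0) + up (s + sg c) w z

/-- number of down departures -/
def dn : ℤ → List Bool → ℤ → ℕ
  | _, [], _ => 0
  | s, c :: w, z => (if c = false ∧ s = z then 1 else 0) + dn (s + sg c) w z

/-- weight of a word -/
noncomputable def wt (w : List Bool) : ℝ≥0∞ := (2⁻¹ : ℝ≥0∞) ^ w.length

theorem wt_append (v w : List Bool) : wt (v ++ w) = wt v * wt w := by
  simp [wt, pow_add]

theorem wt_cons (c : Bool) (w : List Bool) : wt (c :: w) = 2⁻¹ * wt w := by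
  simp [wt, pow_succ, mul_comm]

theorem pos_append (s : ℤ) (v w : List Bool) : pos s (v ++ w) = pos (pos s v) w := by
  induction v generalizing s with
  | nil => rfl
  | cons c v ih => simp [pos, ih]

theorem vis_append (s : ℤ) (v w : List Bool) (z : ℤ) :
    vis s (v ++ w) z = vis s v z + vis (pos s v) w z := by
  induction v generalizing s with
  | nil => simp [vis, pos]
  | cons c v ih => simp [vis, pos, ih]; omega

theorem vis_pos_of_ne_nil (s : ℤ) (w : List Bool) (hw : w ≠ []) : 1 ≤ vis s w (pos s w) := by
  induction w generalizing s with
  | nil => exact absurd rfl hw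
  | cons c w ih =>
    by_cases h : w = []
    · subst h; simp [vis, pos]
    · have := ih (s + sg c) h
      simp only [vis, pos]; omega

theorem vis_eq (s : ℤ) (w : List Bool) (z : ℤ) :
    vis s w z = up s w (z - 1) + dn s w (z + 1) := by
  induction w generalizing s with
  | nil => simp [vis, up, dn]
  | cons c w ih =>
    simp only [vis, up, dn, ih]
    cases c <;> simp [sg] <;> split_ifs <;> omega

/-- the edge relation -/
def Edge (y s : ℤ) (a b : ℤ → ℕ) : Prop :=
  ∀ z, a (z + 1) + (if s ≤ z ∧ z < y then 1 else 0) = b z + (if y ≤ z ∧ z < s then 1 else 0)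

theorem edge_word (s : ℤ) (w : List Bool) : Edge (pos s w) s (dn s w) (up s w) := by
  induction w generalizing s with
  | nil => intro z; rfl
  | cons c w ih =>
    intro z
    have h := ih (s + sg c) z
    simp only [dn, up, pos]
    cases c <;> simp [sg] at h ⊢ <;> split_ifs at h ⊢ <;> omega

theorem vis_le_length (s : ℤ) (w : List Bool) (z : ℤ) : vis s w z ≤ w.length := by
  induction w generalizing s with
  | nil => simp [vis]
  | cons c w ih =>
    simp only [vis, List.length_cons]
    have := ih (s + sg c)
    split_ifs <;> omega

theorem vis_far (s : ℤ) (w : List Bool) (z : ℤ) (hz : (w.length : ℤ) < |z - s|) : vis s w z = 0 := by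
  induction w generalizing s with
  | nil => simp [vis]
  | cons c w ih =>
    have h1 : (w.length : ℤ) < |z - (s + sg c)| := by
      simp only [List.length_cons] at hz
      push_cast at hz
      cases c <;> simp [sg] <;> grind
    have h2 : s + sg c ≠ z := by
      intro h
      rw [← h] at h1
      simp at h1
      omega
    simp [vis, h2, ih _ h1]

/-- local factor -/
def cf (y z : ℤ) (A B : ℕ) : ℕ :=
  if y < z then (A + B - 1).choose B else if z < y then (A + B - 1).choose A else (A + B).choose A

/-- total weight of words from `s` to `y` with prescribed departures -/
noncomputable def T (y s : ℤ) (a b : ℤ → ℕ) : ℝ≥0∞ := by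
  classical
  exact ∑' w : List Bool, if pos s w = y ∧ dn s w = a ∧ up s w = b then wt w else 0

theorem tsum_list (f : List Bool → ℝ≥0∞) :
    ∑' w, f w = f [] + ((∑' w, f (true :: w)) + ∑' w, f (false :: w)) := by
  let e : Unit ⊕ (List Bool ⊕ List Bool) ≃ List Bool :=
    { toFun := fun x => match x with
        | .inl _ => []
        | .inr (.inl w) => true :: w
        | .inr (.inr w) => false :: w
      invFun := fun w => match w with
        | [] => .inl ()
        | true :: w => .inr (.inl w)
        | false :: w => .inr (.inr w)
      left_inv := by rintro (_ | _ | _) <;> rfl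
      right_inv := by rintro (_ | ⟨_ | _, w⟩) <;> rfl }
  rw [← e.tsum_eq, Summable.tsum_sum ENNReal.summable ENNReal.summable,
    Summable.tsum_sum ENNReal.summable ENNReal.summable]
  simp [e]

open Classical in
theorem T_step (y s : ℤ) (a b : ℤ → ℕ) :
    T y s a b = (if s = y ∧ a = 0 ∧ b = 0 then 1 else 0) +
      ((if 0 < b s then 2⁻¹ * T y (s + 1) a (Function.update b s (b s - 1)) else 0) +
       (if 0 < a s then 2⁻¹ * T y (s - 1) (Function.update a s (a s - 1)) b else 0)) := by
  have key : ∀ (f g : ℤ → ℕ) (t : ℤ), ((fun z => (if t = z then 1 else 0) + f z) = g) ↔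
      (0 < g t ∧ f = Function.update g t (g t - 1)) := by
    intro f g t
    constructor
    · intro h
      subst h
      refine ⟨by simp, ?_⟩
      funext z
      by_cases hz : z = t
      · subst hz; simp
      · simp [Function.update_of_ne hz, Ne.symm hz]
    · rintro ⟨h1, h2⟩
      subst h2
      funext z
      by_cases hz : z = t
      · subst hz; simp; omega
      · simp [Function.update_of_ne hz, Ne.symm hz]
  have key0 : ∀ (c : Bool) (w : List Bool), dn s (c :: w) =
      fun z => (if c = false ∧ s = z then 1 else 0) + dn (s + sg c) w z := fun _ _ => rfl
  have key1 : ∀ (c : Bool) (w : List Bool), up s (c :: w) =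
      fun z => (if c = true ∧ s = z then 1 else 0) + up (s + sg c) w z := fun _ _ => rfl
  have d0 : dn s [] = 0 := rfl
  have u0 : up s [] = 0 := rfl
  unfold T
  rw [tsum_list]
  congr 1
  · simp only [pos, d0, u0, wt]
    simp only [eq_comm (a := (0 : ℤ → ℕ))]
    simp
  · congr 1
    · have : ∀ w, (pos s (true :: w) = y ∧ dn s (true :: w) = a ∧ up s (true :: w) = b) ↔
          (0 < b s ∧ (pos (s + 1) w = y ∧ dn (s + 1) w = a ∧
            up (s + 1) w = Function.update b s (b s - 1))) := by
        intro w
        rw [key0, key1]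
        simp only [true_and, Bool.true_eq_false, false_and, if_false, zero_add, key, pos, sg, if_true]
        tauto
      simp only [this, wt_cons]
      by_cases hb : 0 < b s
      · simp only [hb, true_and, if_true]
        rw [← ENNReal.tsum_mul_left]
        simp only [mul_ite, mul_zero]
      · simp [hb]
    · have : ∀ w, (pos s (false :: w) = y ∧ dn s (false :: w) = a ∧ up s (false :: w) = b) ↔
          (0 < a s ∧ (pos (s - 1) w = y ∧ dn (s - 1) w = Function.update a s (a s - 1) ∧
            up (s - 1) w = b)) := by
        intro w
        rw [key0, key1]
        simp only [true_and, Bool.false_eq_true, false_and, if_false, zero_add, key, pos, sg,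
          ← sub_eq_add_neg]
        tauto
      simp only [this, wt_cons]
      by_cases hb : 0 < a s
      · simp only [hb, true_and, if_true]
        rw [← ENNReal.tsum_mul_left]
        simp only [mul_ite, mul_zero]
      · simp [hb]

theorem pascal1 (A B : ℕ) (hA : 1 ≤ A) : (A + B - 1).choose B =
    (if 0 < B then (A + (B - 1) - 1).choose (B - 1) else 0) + ((A - 1) + B - 1).choose B := by
  obtain ⟨A, rfl⟩ := Nat.exists_eq_add_of_le' hA
  cases B with
  | zero => simp
  | succ B =>
    simp only [Nat.zero_lt_succ, if_true, Nat.add_sub_cancel]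
    have e1 : A + 1 + (B + 1) - 1 = (A + B) + 1 := by omega
    have e2 : A + 1 + B - 1 = A + B := by omega
    have e3 : A + (B + 1) - 1 = A + B := by omega
    rw [e1, e2, e3, Nat.choose_succ_succ]

theorem pascal2 (A B : ℕ) (h : 1 ≤ A + B) : (A + B).choose A =
    (if 0 < B then (A + (B - 1)).choose A else 0) +
    (if 0 < A then ((A - 1) + B).choose (A - 1) else 0) := by
  cases A with
  | zero => cases B with
    | zero => simp at h
    | succ B => simp
  | succ A => cases B with
    | zero => simp
    | succ B =>
      simp only [Nat.zero_lt_succ, if_true, Nat.add_sub_cancel]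
      have e1 : A + 1 + (B + 1) = (A + 1 + B) + 1 := by omega
      have e2 : A + (B + 1) = A + 1 + B := by omega
      rw [e1, e2, Nat.choose_succ_succ]
      exact add_comm _ _

theorem cf_step (y s : ℤ) (a b : ℤ → ℕ) (hE : Edge y s a b) (h : 1 ≤ a s + b s) :
    cf y s (a s) (b s) = (if 0 < b s then cf y s (a s) (b s - 1) else 0) +
      (if 0 < a s then cf y s (a s - 1) (b s) else 0) := by
  unfold cf
  rcases lt_trichotomy y s with hs | hs | hs
  · have h1 := hE (s - 1)
    have hA : 1 ≤ a s := by
      simp only [sub_add_cancel] at h1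
      split_ifs at h1 <;> omega
    simp only [hs, if_true, show 0 < a s from hA]
    exact pascal1 _ _ hA
  · subst hs
    simp only [lt_irrefl, if_false]
    exact pascal2 _ _ h
  · have h1 := hE s
    have hA : 1 ≤ b s := by
      split_ifs at h1 <;> omega
    simp only [hs, not_lt.mpr hs.le, if_false, if_true, show 0 < b s from hA]
    have := pascal1 (b s) (a s) hA
    rw [add_comm (b s), add_comm (b s), add_comm (b s - 1)] at this
    rw [this, add_comm]

theorem edge_up (y s : ℤ) (a b : ℤ → ℕ) (hE : Edge y s a b) (h : 0 < b s) :
    Edge y (s + 1) a (Function.update b s (b s - 1)) := by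
  intro z
  have := hE z
  by_cases hz : z = s
  · subst hz; simp; split_ifs at this ⊢ <;> omega
  · rw [Function.update_of_ne hz]; split_ifs at this ⊢ <;> omega

theorem edge_dn (y s : ℤ) (a b : ℤ → ℕ) (hE : Edge y s a b) (h : 0 < a s) :
    Edge y (s - 1) (Function.update a s (a s - 1)) b := by
  intro z
  have := hE z
  by_cases hz : z + 1 = s
  · subst hz; simp; split_ifs at this ⊢ <;> omega
  · rw [Function.update_of_ne hz]; split_ifs at this ⊢ <;> omega

theorem T_formula (y : ℤ) (J : Finset ℤ) : ∀ (n : ℕ) (s : ℤ) (a b : ℤ → ℕ), Edge y s a b →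
    (∀ z, z ∉ J → a z = 0 ∧ b z = 0) → ∑ z ∈ J, (a z + b z) = n →
    T y s a b = (2⁻¹ : ℝ≥0∞) ^ n * ((∏ z ∈ J, cf y z (a z) (b z) : ℕ) : ℝ≥0∞) := by
  intro n
  induction n with
  | zero =>
    intro s a b hE hJ hn
    have h0 : ∀ z, a z = 0 ∧ b z = 0 := by
      intro z
      by_cases hz : z ∈ J
      · have := (Finset.sum_eq_zero_iff.mp hn) z hz
        omega
      · exact hJ z hz
    have hs : s = y := by
      rcases lt_trichotomy y s with hs | hs | hs
      · have := hE y
        simp [h0] at this; omega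
      · exact hs.symm
      · have := hE s
        simp [h0] at this; omega
    have ha : a = 0 := funext fun z => (h0 z).1
    have hb : b = 0 := funext fun z => (h0 z).2
    subst ha hb hs
    rw [T_step]
    simp [cf]
  | succ n ih =>
    intro s a b hE hJ hn
    rw [T_step]
    have hne : ¬ (s = y ∧ a = 0 ∧ b = 0) := by
      rintro ⟨_, h1, h2⟩
      subst h1 h2
      simp at hn
    rw [if_neg hne, zero_add]
    by_cases hs : 1 ≤ a s + b s
    · have hsJ : s ∈ J := by
        by_contra h
        have := hJ s h
        omega
      have hsum : ∀ (a' b' : ℤ → ℕ), (∀ z, z ≠ s → a' z = a z ∧ b' z = b z) →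
          a' s + b' s + 1 = a s + b s → ∑ z ∈ J, (a' z + b' z) = n := by
        intro a' b' h1 h2
        rw [← Finset.add_sum_erase _ _ hsJ] at hn ⊢
        have : ∑ z ∈ J.erase s, (a' z + b' z) = ∑ z ∈ J.erase s, (a z + b z) := by
          apply Finset.sum_congr rfl
          intro z hz
          have := h1 z (Finset.ne_of_mem_erase hz)
          rw [this.1, this.2]
        omega
      have hprod : ∀ (a' b' : ℤ → ℕ), (∀ z, z ≠ s → a' z = a z ∧ b' z = b z) →
          ∏ z ∈ J, cf y z (a' z) (b' z) = cf y s (a' s) (b' s) *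
            ∏ z ∈ J.erase s, cf y z (a z) (b z) := by
        intro a' b' h1
        rw [← Finset.mul_prod_erase _ _ hsJ]
        congr 1
        apply Finset.prod_congr rfl
        intro z hz
        have := h1 z (Finset.ne_of_mem_erase hz)
        rw [this.1, this.2]
      have hsupp : ∀ (a' b' : ℤ → ℕ), (∀ z, z ≠ s → a' z = a z ∧ b' z = b z) →
          (∀ z, z ∉ J → a' z = 0 ∧ b' z = 0) := by
        intro a' b' h1 z hz
        have hzs : z ≠ s := fun h => hz (h ▸ hsJ)
        rw [(h1 z hzs).1, (h1 z hzs).2]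
        exact hJ z hz
      have hA : ∀ z, z ≠ s → a z = a z ∧ (Function.update b s (b s - 1)) z = b z :=
        fun z hz => ⟨rfl, Function.update_of_ne hz _ _⟩
      have hB : ∀ z, z ≠ s → (Function.update a s (a s - 1)) z = a z ∧ b z = b z :=
        fun z hz => ⟨Function.update_of_ne hz _ _, rfl⟩
      have e1 : (if 0 < b s then 2⁻¹ * T y (s + 1) a (Function.update b s (b s - 1)) else 0) =
          (2⁻¹ : ℝ≥0∞) ^ (n + 1) * (((if 0 < b s then cf y s (a s) (b s - 1) else 0) *
            ∏ z ∈ J.erase s, cf y z (a z) (b z) : ℕ) : ℝ≥0∞) := by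
        split_ifs with hb
        · rw [ih _ _ _ (edge_up y s a b hE hb) (hsupp _ _ hA)
            (hsum _ _ hA (by simp; omega)), hprod _ _ hA]
          simp [pow_succ]
          ring
        · simp
      have e2 : (if 0 < a s then 2⁻¹ * T y (s - 1) (Function.update a s (a s - 1)) b else 0) =
          (2⁻¹ : ℝ≥0∞) ^ (n + 1) * (((if 0 < a s then cf y s (a s - 1) (b s) else 0) *
            ∏ z ∈ J.erase s, cf y z (a z) (b z) : ℕ) : ℝ≥0∞) := by
        split_ifs with hb
        · rw [ih _ _ _ (edge_dn y s a b hE hb) (hsupp _ _ hB)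
            (hsum _ _ hB (by simp; omega)), hprod _ _ hB]
          simp [pow_succ]
          ring
        · simp
      rw [e1, e2, ← mul_add, ← Nat.cast_add, ← add_mul, ← cf_step y s a b hE hs,
        Finset.mul_prod_erase J (fun z => cf y z (a z) (b z)) hsJ]
    · have h0 : a s = 0 ∧ b s = 0 := by omega
      have hsy : s = y := by
        rcases lt_trichotomy y s with h | h | h
        · have := hE (s - 1)
          simp only [sub_add_cancel] at this
          split_ifs at this <;> omega
        · exact h.symm
        · have := hE s
          split_ifs at this <;> omega
      subst hsy
      have hEz : ∀ z, a (z + 1) = b z := by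
        intro z
        have := hE z
        split_ifs at this <;> omega
      simp only [h0, lt_irrefl, if_false, add_zero]
      by_contra hcon
      have hP : ∏ z ∈ J, cf s z (a z) (b z) ≠ 0 := by
        intro h
        rw [h] at hcon
        simp at hcon
      have hne : ∀ z, cf s z (a z) (b z) ≠ 0 := by
        intro z
        by_cases hz : z ∈ J
        · exact Finset.prod_ne_zero_iff.mp hP z hz
        · rw [(hJ z hz).1, (hJ z hz).2]
          simp [cf]
      have hup : ∀ k : ℕ, b (s + k) = 0 := by
        intro k
        induction k with
        | zero => simpa using h0.2
        | succ k ihk =>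
          have h1 := hEz (s + k)
          rw [ihk] at h1
          have h2 := hne (s + k + 1)
          rw [h1, cf, if_pos (by omega)] at h2
          push_cast
          rw [← add_assoc]
          by_contra h3
          exact h2 (Nat.choose_eq_zero_of_lt (by omega))
      have hdn : ∀ k : ℕ, a (s - k) = 0 := by
        intro k
        induction k with
        | zero => simpa using h0.1
        | succ k ihk =>
          have h1 := hEz (s - k - 1)
          rw [sub_add_cancel, ihk] at h1
          have h2 := hne (s - k - 1)
          rw [← h1, cf, if_neg (by omega), if_pos (by omega)] at h2
          push_cast
          rw [← sub_sub]
          by_contra h3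
          exact h2 (Nat.choose_eq_zero_of_lt (by omega))
      have hall : ∀ z, b z = 0 := by
        intro z
        rcases le_or_gt s z with h | h
        · have := hup (z - s).toNat
          rwa [show s + ((z - s).toNat : ℤ) = z by omega] at this
        · rw [← hEz]
          have := hdn (s - (z + 1)).toNat
          rwa [show s - ((s - (z + 1)).toNat : ℤ) = z + 1 by omega] at this
      have hall' : ∀ z, a z = 0 := by
        intro z
        have := hEz (z - 1)
        rw [sub_add_cancel] at this
        rw [this, hall]
      simp [hall, hall'] at hn

end Fav3


end FavPart1

section FavPart2

open scoped ENNReal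

namespace Fav3

open Classical in
/-- total weight of the words satisfying a predicate -/
noncomputable def Sm (P : List Bool → Prop) : ℝ≥0∞ := ∑' w, if P w then wt w else 0

theorem Sm_mono {P Q : List Bool → Prop} (h : ∀ w, P w → Q w) : Sm P ≤ Sm Q := by
  unfold Sm
  apply ENNReal.tsum_le_tsum
  intro w
  by_cases hp : P w
  · simp [hp, h w hp]
  · simp [hp]

open Classical in
theorem kraft_aux (n : ℕ) : ∀ (P : List Bool → Prop), (∀ w v, P w → P (w ++ v) → v = []) →
    Sm (fun w => P w ∧ w.length ≤ n) ≤ 1 := by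
  induction n with
  | zero =>
    intro P hP
    unfold Sm
    rw [tsum_list]
    simp [wt]
    split_ifs <;> simp
  | succ n ih =>
    intro P hP
    by_cases h0 : P []
    · have : ∀ w, P w → w = [] := fun w hw => hP [] w h0 hw
      unfold Sm
      rw [tsum_eq_single []]
      · simp [wt, h0]
      · intro w hw
        rw [if_neg]
        rintro ⟨h1, -⟩
        exact hw (this w h1)
    · unfold Sm
      rw [tsum_list]
      have key : ∀ c : Bool, (∑' w, if P (c :: w) ∧ (c :: w).length ≤ n + 1 then wt (c :: w) else 0)
          ≤ 2⁻¹ := by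
        intro c
        have := ih (fun w => P (c :: w)) (fun w v h1 h2 => hP (c :: w) v h1 h2)
        unfold Sm at this
        calc _ = ∑' w, (2⁻¹ : ℝ≥0∞) * (if P (c :: w) ∧ w.length ≤ n then wt w else 0) := by
              apply tsum_congr
              intro w
              simp [wt_cons]
          _ ≤ _ := by
              rw [ENNReal.tsum_mul_left]
              calc _ ≤ (2⁻¹ : ℝ≥0∞) * 1 := by
                    gcongr
                    refine le_trans (le_of_eq ?_) this
                    congr!
                _ = _ := by simp
      simp only [h0, false_and, if_false, zero_add]
      have := add_le_add (key true) (key false)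
      rw [ENNReal.inv_two_add_inv_two] at this
      refine le_trans (le_of_eq ?_) this
      congr!

open Classical in
theorem kraft (P : List Bool → Prop) (hP : ∀ w v, P w → P (w ++ v) → v = []) : Sm P ≤ 1 := by
  unfold Sm
  rw [ENNReal.tsum_eq_iSup_sum]
  apply iSup_le
  intro F
  obtain ⟨n, hn⟩ : ∃ n, ∀ w ∈ F, w.length ≤ n :=
    ⟨F.sup List.length, fun w hw => Finset.le_sup (f := List.length) hw⟩
  refine le_trans ?_ (kraft_aux n P hP)
  unfold Sm
  refine le_trans (le_of_eq ?_) (ENNReal.sum_le_tsum F)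
  apply Finset.sum_congr rfl
  intro w hw
  simp [hn w hw]

/-- triple favourite words -/
def Gam (l0 : ℤ → ℕ) (s : ℤ) (h : ℕ) (w : List Bool) : Prop :=
  ∀ z, if pos s w - 1 ≤ z ∧ z ≤ pos s w + 1 then l0 z + vis s w z = h else l0 z + vis s w z < h

/-- relaxed words -/
def Dom (l0 : ℤ → ℕ) (s : ℤ) (h : ℕ) (w : List Bool) : Prop :=
  ∀ z, (z = pos s w → l0 z + vis s w z = h) ∧
    (z < pos s w - 2 ∨ pos s w + 2 < z → l0 z + vis s w z < h)

theorem Sm_dom (l0 : ℤ → ℕ) (s : ℤ) (h : ℕ) : Sm (Dom l0 s h) ≤ 5 := by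
  have h1 : Sm (Dom l0 s h) ≤ ∑ ρ ∈ Finset.range 5,
      Sm (fun w => Dom l0 s h w ∧ pos s w % 5 = ρ) := by
    unfold Sm
    rw [← Summable.tsum_finsetSum (fun _ _ => ENNReal.summable)]
    apply ENNReal.tsum_le_tsum
    intro w
    by_cases hw : Dom l0 s h w
    · have hm : (pos s w % 5).toNat ∈ Finset.range 5 := by
        simp; omega
      refine le_trans (le_of_eq ?_) (Finset.single_le_sum (fun _ _ => zero_le) hm)
      rw [if_pos hw, if_pos]
      refine ⟨hw, by omega⟩
    · simp [hw]
  refine le_trans h1 ?_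
  have h2 : ∀ ρ ∈ Finset.range 5, Sm (fun w => Dom l0 s h w ∧ pos s w % 5 = ρ) ≤ 1 := by
    intro ρ _
    apply kraft
    rintro w v ⟨hw, hw2⟩ ⟨hv, hv2⟩
    by_contra hne
    have a1 := (hw (pos s w)).1 rfl
    by_cases hy : pos s (w ++ v) = pos s w
    · have a2 := (hv (pos s w)).1 hy.symm
      rw [vis_append] at a2
      have := vis_pos_of_ne_nil (pos s w) v hne
      rw [← pos_append, hy] at this
      omega
    · have a2 := (hv (pos s w)).2 (by omega)
      rw [vis_append] at a2
      omega
  calc _ ≤ ∑ ρ ∈ Finset.range 5, (1 : ℝ≥0∞) := Finset.sum_le_sum h2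
    _ = 5 := by simp

/-- the one-sided weight -/
noncomputable def phi (A B e : ℕ) (v : ℕ) : ℝ :=
  ((A + v - 1).choose v : ℝ) * ((v + e + B - 1).choose B : ℝ) * (1 / 4) ^ v

theorem phi_nonneg (A B e v : ℕ) : 0 ≤ phi A B e v := by unfold phi; positivity

theorem phi_step (A B e v : ℕ) (hA : 1 ≤ A) :
    4 * (v + 1) * (v + e) * phi A B e (v + 1) = (A + v) * (v + e + B) * phi A B e v := by
  unfold phi
  have h1 : ((A + (v + 1) - 1).choose (v + 1) : ℝ) * (v + 1) = (A + v) * (A + v - 1).choose v := by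
    obtain ⟨A, rfl⟩ := Nat.exists_eq_add_of_le' hA
    have := Nat.add_one_mul_choose_eq (A + v) v
    rw [show A + 1 + (v + 1) - 1 = A + v + 1 by omega, show A + 1 + v - 1 = A + v by omega]
    have h2 : ((A + v + 1 : ℕ) : ℝ) * ((A + v).choose v : ℕ) =
      ((A + v + 1).choose (v + 1) : ℕ) * ((v + 1 : ℕ) : ℝ) := by exact_mod_cast this
    push_cast at h2 ⊢
    linarith
  have h2 : ((v + 1 + e + B - 1).choose B : ℝ) * (v + e) = (v + e + B) * (v + e + B - 1).choose B := by
    rw [show v + 1 + e + B - 1 = v + e + B by omega]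
    generalize hn : v + e = n
    rcases Nat.eq_zero_or_pos n with h0 | h0
    · subst h0
      have e1 : (v : ℝ) + e = 0 := by exact_mod_cast hn
      rw [e1]
      rcases Nat.eq_zero_or_pos B with hB | hB
      · subst hB; simp
      · rw [Nat.choose_eq_zero_of_lt (show 0 + B - 1 < B by omega)]; simp
    · obtain ⟨n, rfl⟩ := Nat.exists_eq_add_of_le' h0
      have e1 : (v : ℝ) + e = n + 1 := by exact_mod_cast hn
      rw [e1, show n + 1 + B - 1 = n + B by omega, show n + 1 + B = n + B + 1 by omega]
      have := Nat.choose_mul_succ_eq (n + B) B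
      rw [show n + B + 1 - B = n + 1 by omega] at this
      have h2 : (((n + B).choose B : ℕ) : ℝ) * ((n + B + 1 : ℕ) : ℝ) =
        ((n + B + 1).choose B : ℕ) * ((n + 1 : ℕ) : ℝ) := by exact_mod_cast this
      push_cast at h2 ⊢
      linarith
  rw [pow_succ]
  linear_combination (norm := ring_nf) (((v + 1 + e + B - 1).choose B : ℝ) * (v + e) * (1/4)^v) * h1 +
    ((A + v) * ((A + v - 1).choose v : ℝ) * (1/4)^v) * h2

set_option maxHeartbeats 800000 in
theorem phi_lemma (A B e u r J : ℕ) (hr : r ≤ A + u) (hJ : 32 * J ^ 2 ≤ r) :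
    ((J : ℝ) + 1) * phi A B e u ≤ 2 * ∑ v ∈ Finset.range (u + J + 1), phi A B e v := by
  have hu_mem : u ∈ Finset.range (u + J + 1) := by rw [Finset.mem_range]; omega
  have hsingle : phi A B e u ≤ ∑ v ∈ Finset.range (u + J + 1), phi A B e v :=
    Finset.single_le_sum (f := fun v => phi A B e v) (fun v _ => phi_nonneg A B e v) hu_mem
  have hp := phi_nonneg A B e u
  rcases Nat.eq_zero_or_pos J with hJ0 | hJ0
  · subst hJ0; simp only [Nat.cast_zero] at *; linarith
  rcases Nat.eq_zero_or_pos A with hA0 | hA0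
  · have : phi A B e u = 0 := by
      unfold phi
      subst hA0
      have : 0 < u := by nlinarith
      rw [Nat.choose_eq_zero_of_lt (show 0 + u - 1 < u by omega)]
      simp
    rw [this] at hsingle ⊢
    linarith
  have hJr : (32 : ℝ) * J ^ 2 ≤ r := by exact_mod_cast hJ
  have hJ1 : (1 : ℝ) ≤ J := by exact_mod_cast hJ0
  have hr0 : (32 : ℝ) ≤ r := by nlinarith
  have hrA : (r : ℝ) ≤ A + u := by exact_mod_cast hr
  have hA1 : (1 : ℝ) ≤ A := by exact_mod_cast hA0
  set x : ℝ := 16 * J / r with hx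
  have hx0 : 0 ≤ x := by positivity
  have hxr : x * r = 16 * J := by rw [hx]; field_simp
  have hJx : J * x ≤ 1 / 2 := by
    rw [hx, mul_div_assoc', div_le_iff₀ (by linarith)]; nlinarith
  have hx1 : x ≤ 1 / 2 := by nlinarith
  have hpow : ∀ j ≤ J, 1 / 2 ≤ (1 - x) ^ j := by
    intro j hj
    have h1 := one_add_mul_le_pow (show (-2 : ℝ) ≤ -x by linarith) j
    have h2 : (j : ℝ) ≤ J := by exact_mod_cast hj
    have h3 : (j : ℝ) * x ≤ J * x := by gcongr
    rw [← sub_eq_add_neg] at h1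
    linarith
  -- the comparison of products
  have hcmp : ∀ p q : ℝ, 0 ≤ p → p ≤ q → q ≤ p + J → (r : ℝ) / 8 ≤ q →
      (1 - x) * ((q + 1) * (q + e)) ≤ (p + 1) * (p + e) := by
    intro p q hp0 hpq hqp hq
    have h1 : (J : ℝ) ≤ x / 2 * q := by nlinarith
    have he : (0 : ℝ) ≤ e := by positivity
    have h2 : (1 - x / 2) * (q + 1) ≤ p + 1 := by nlinarith
    have h3 : (1 - x / 2) * (q + e) ≤ p + e := by nlinarith
    have h4 : 0 ≤ (1 - x / 2) * (q + e) := by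
      apply mul_nonneg <;> linarith
    have h5 : 0 ≤ (q + 1) * (q + e) := by
      apply mul_nonneg <;> linarith
    calc (1 - x) * ((q + 1) * (q + e)) ≤ ((1 - x / 2) * (q + 1)) * ((1 - x / 2) * (q + e)) := by
          nlinarith [mul_nonneg (sq_nonneg x) h5]
      _ ≤ (p + 1) * (p + e) := by
          apply mul_le_mul h2 h3 h4; linarith
  rcases le_or_gt (4 * ((u : ℝ) + 1) * (u + e)) ((A + u) * (u + e + B)) with hR | hR
  · -- going up
    have hstep : ∀ j < J, (1 - x) * phi A B e (u + j) ≤ phi A B e (u + j + 1) := by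
      intro j hj
      have hs := phi_step A B e (u + j) hA0
      have hpj := phi_nonneg A B e (u + j)
      have hpj1 := phi_nonneg A B e (u + j + 1)
      have hjJ : (j : ℝ) ≤ J := by exact_mod_cast hj.le
      set v : ℝ := ((u + j : ℕ) : ℝ) with hv
      have hvu : v = u + j := by rw [hv]; push_cast; ring
      have hu0 : (0 : ℝ) ≤ u := by positivity
      have hj0 : (0 : ℝ) ≤ j := by positivity
      have he : (0 : ℝ) ≤ e := by positivity
      have hB : (0 : ℝ) ≤ B := by positivity
      have hden : 0 < 4 * (v + 1) * (v + e) ∨ 4 * (v + 1) * (v + e) = 0 := by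
        rcases (show (0:ℝ) ≤ v + e by linarith).lt_or_eq with h | h
        · left; apply mul_pos _ h; linarith
        · right; rw [← h]; simp
      have main : (1 - x) * (4 * ((v + 1) * (v + e))) ≤ (A + v) * (v + e + B) := by
        rcases le_or_gt (4 * (v + 1)) (A + v) with h4 | h4
        · have : 0 ≤ 4 * ((v + 1) * (v + e)) := by
            apply mul_nonneg (by norm_num); apply mul_nonneg <;> linarith
          calc _ ≤ 1 * (4 * ((v + 1) * (v + e))) := by gcongr; linarith
            _ = (4 * (v + 1)) * (v + e) := by ring
            _ ≤ (A + v) * (v + e + B) := by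
              apply mul_le_mul h4 (by linarith) (by linarith) (by linarith)
        · have := hcmp u v hu0 (by linarith) (by linarith) (by linarith)
          calc _ ≤ 4 * (((u : ℝ) + 1) * (u + e)) := by linarith
            _ ≤ ((A : ℝ) + u) * (u + e + B) := by linarith
            _ ≤ (A + v) * (v + e + B) := by
              apply mul_le_mul <;> linarith
      rcases hden with hd | hd
      · have : 4 * (v + 1) * (v + e) * ((1 - x) * phi A B e (u + j)) ≤
            4 * (v + 1) * (v + e) * phi A B e (u + j + 1) := by
          rw [hs]
          calc _ = (1 - x) * (4 * ((v + 1) * (v + e))) * phi A B e (u + j) := by ring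
            _ ≤ _ := by gcongr
        exact le_of_mul_le_mul_left this hd
      · -- v + e = 0
        have hve : v + e = 0 := by
          rcases mul_eq_zero.mp hd with h | h
          · exfalso; linarith
          · exact h
        have hv0 : u + j = 0 := by
          have : v = 0 := by linarith
          rw [hv] at this; exact_mod_cast this
        have he0 : e = 0 := by
          have : (e : ℝ) = 0 := by linarith
          exact_mod_cast this
        rw [hv0, he0]
        unfold phi
        rcases Nat.eq_zero_or_pos B with hB0 | hB0
        · subst hB0
          have hu00 : (u : ℝ) = 0 := by
            have : u = 0 := by omega
            exact_mod_cast this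
          have : (32 : ℝ) ≤ A := by linarith
          simp
          linarith
        · rw [Nat.choose_eq_zero_of_lt (show 0 + 0 + B - 1 < B by omega)]
          simp only [Nat.cast_zero, mul_zero, zero_mul]
          positivity
    have hall : ∀ j ≤ J, (1 - x) ^ j * phi A B e u ≤ phi A B e (u + j) := by
      intro j
      induction j with
      | zero => intro _; simp
      | succ j ih =>
        intro hj
        have := hstep j (by omega)
        calc _ = (1 - x) * ((1 - x) ^ j * phi A B e u) := by ring
          _ ≤ (1 - x) * phi A B e (u + j) := by
            apply mul_le_mul_of_nonneg_left (ih (by omega)); linarith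
          _ ≤ _ := this
    have hsum : ∑ j ∈ Finset.range (J + 1), phi A B e (u + j) ≤
        ∑ v ∈ Finset.range (u + J + 1), phi A B e v := by
      rw [show u + J + 1 = u + (J + 1) by ring, Finset.sum_range_add _ u (J + 1)]
      have : 0 ≤ ∑ v ∈ Finset.range u, phi A B e v :=
        Finset.sum_nonneg fun v _ => phi_nonneg A B e v
      linarith
    have : ∑ j ∈ Finset.range (J + 1), (1 / 2 * phi A B e u) ≤
        ∑ j ∈ Finset.range (J + 1), phi A B e (u + j) := by
      apply Finset.sum_le_sum
      intro j hj
      have hj' : j ≤ J := by simp at hj; omega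
      refine le_trans ?_ (hall j hj')
      exact mul_le_mul_of_nonneg_right (hpow j hj') hp
    simp at this
    linarith
  · -- going down
    have hu4 : (r : ℝ) < 4 * (u + 1) := by
      by_contra hcon
      push Not at hcon
      have he : (0 : ℝ) ≤ e := by positivity
      have hB : (0 : ℝ) ≤ B := by positivity
      have hu0 : (0 : ℝ) ≤ u := by positivity
      have : 4 * ((u : ℝ) + 1) * (u + e) ≤ (A + u) * (u + e + B) := by
        apply mul_le_mul <;> linarith
      linarith
    have hJu : J ≤ u := by
      have : (J : ℝ) ≤ u := by nlinarith
      exact_mod_cast this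
    have hstep : ∀ v, v < u → u ≤ v + J → (1 - x) * phi A B e (v + 1) ≤ phi A B e v := by
      intro v hvu hvJ
      have hs := phi_step A B e v hA0
      have hpj := phi_nonneg A B e v
      have hpj1 := phi_nonneg A B e (v + 1)
      have hu0 : (0 : ℝ) ≤ u := by positivity
      have hv0 : (0 : ℝ) ≤ v := by positivity
      have he : (0 : ℝ) ≤ e := by positivity
      have hB : (0 : ℝ) ≤ B := by positivity
      have hvu' : (v : ℝ) < u := by exact_mod_cast hvu
      have hvJ' : (u : ℝ) ≤ v + J := by exact_mod_cast hvJ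
      have hc := hcmp v u hv0 hvu'.le hvJ' (by linarith)
      have hmain : (1 - x) * ((A + v) * (v + e + B)) ≤ 4 * (v + 1) * (v + e) := by
        calc _ ≤ (1 - x) * ((A + u) * (u + e + B)) := by
              apply mul_le_mul_of_nonneg_left _ (by linarith)
              apply mul_le_mul <;> linarith
          _ ≤ (1 - x) * (4 * ((u : ℝ) + 1) * (u + e)) := by
              apply mul_le_mul_of_nonneg_left hR.le (by linarith)
          _ ≤ _ := by linarith
      rcases (show (0:ℝ) ≤ v + e + B by linarith).lt_or_eq with h | h
      · have hd : 0 < (A + v) * ((v:ℝ) + e + B) := mul_pos (by linarith) h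
        have : (A + v) * ((v:ℝ) + e + B) * ((1 - x) * phi A B e (v + 1)) ≤
            (A + v) * ((v:ℝ) + e + B) * phi A B e v := by
          rw [← hs]
          calc _ = (1 - x) * ((A + v) * (v + e + B)) * phi A B e (v + 1) := by ring
            _ ≤ _ := by gcongr
        exact le_of_mul_le_mul_left this hd
      · exfalso
        have h00 : (v : ℝ) = 0 := by linarith
        have h01 : (J : ℝ) * 1 ≤ J * J := by gcongr
        have h02 : (J : ℝ) ^ 2 = J * J := by ring
        linarith
    have hall : ∀ j ≤ J, (1 - x) ^ j * phi A B e u ≤ phi A B e (u - j) := by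
      intro j
      induction j with
      | zero => intro _; simp
      | succ j ih =>
        intro hj
        have := hstep (u - (j + 1)) (by omega) (by omega)
        rw [show u - (j + 1) + 1 = u - j by omega] at this
        calc _ = (1 - x) * ((1 - x) ^ j * phi A B e u) := by ring
          _ ≤ (1 - x) * phi A B e (u - j) := by
            apply mul_le_mul_of_nonneg_left (ih (by omega)); linarith
          _ ≤ _ := this
    have hsum : ∑ j ∈ Finset.range (J + 1), phi A B e (u - j) ≤
        ∑ v ∈ Finset.range (u + J + 1), phi A B e v := by
      have hinj : Set.InjOn (fun j => u - j) (Finset.range (J + 1) : Set ℕ) := by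
        intro a ha b hb hab
        simp at ha hb hab
        omega
      rw [← Finset.sum_image (f := fun v => phi A B e v) hinj]
      apply Finset.sum_le_sum_of_subset_of_nonneg
      · intro v hv
        simp at hv ⊢
        omega
      · intro v _ _; exact phi_nonneg A B e v
    have : ∑ j ∈ Finset.range (J + 1), (1 / 2 * phi A B e u) ≤
        ∑ j ∈ Finset.range (J + 1), phi A B e (u - j) := by
      apply Finset.sum_le_sum
      intro j hj
      have hj' : j ≤ J := by simp at hj; omega
      refine le_trans ?_ (hall j hj')
      exact mul_le_mul_of_nonneg_right (hpow j hj') hp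
    simp at this
    linarith

end Fav3


end FavPart2

section FavPart3

open scoped ENNReal

namespace Fav3

/-- local weight -/
noncomputable def gg (y z : ℤ) (A B : ℕ) : ℝ≥0∞ := (2⁻¹ : ℝ≥0∞) ^ (A + B) * (cf y z A B : ℝ≥0∞)

theorem T_prod (y : ℤ) (J : Finset ℤ) (s : ℤ) (a b : ℤ → ℕ) (hE : Edge y s a b)
    (hJ : ∀ z, z ∉ J → a z = 0 ∧ b z = 0) :
    T y s a b = ∏ z ∈ J, gg y z (a z) (b z) := by
  rw [T_formula y J _ s a b hE hJ rfl]
  unfold gg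
  rw [Finset.prod_mul_distrib, Finset.prod_pow_eq_pow_sum]
  push_cast
  rfl

theorem dn_up_le (s : ℤ) (w : List Bool) (z : ℤ) :
    dn s w z ≤ vis s w (z - 1) ∧ up s w z ≤ vis s w (z + 1) := by
  have h1 := vis_eq s w (z - 1)
  have h2 := vis_eq s w (z + 1)
  rw [sub_add_cancel] at h1
  rw [add_sub_cancel_right] at h2
  omega

theorem supp_word (s : ℤ) (w : List Bool) : ∃ J : Finset ℤ, ∀ z, z ∉ J → dn s w z = 0 ∧ up s w z = 0 := by
  refine ⟨Finset.Icc (s - w.length - 1) (s + w.length + 1), ?_⟩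
  intro z hz
  have h := dn_up_le s w z
  have h1 : (w.length : ℤ) < |z - s| - 1 := by
    simp only [Finset.mem_Icc, not_and_or, not_le] at hz
    rcases hz with hz | hz
    · have := neg_le_abs (z - s); omega
    · have := le_abs_self (z - s); omega
  have h2 : vis s w (z - 1) = 0 := by
    apply vis_far
    have := abs_sub_abs_le_abs_sub (z - s) 1
    rw [show z - s - 1 = z - 1 - s by ring] at this
    simp at this; omega
  have h3 : vis s w (z + 1) = 0 := by
    apply vis_far
    have := abs_sub_abs_le_abs_sub (z - s) (-1)
    rw [show z - s - -1 = z + 1 - s by ring] at this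
    simp at this; omega
  omega

theorem T_ne_zero (y s : ℤ) (a b : ℤ → ℕ) (h : T y s a b ≠ 0) :
    Edge y s a b ∧ ∃ J : Finset ℤ, ∀ z, z ∉ J → a z = 0 ∧ b z = 0 := by
  have : ∃ w, pos s w = y ∧ dn s w = a ∧ up s w = b := by
    by_contra hcon
    push Not at hcon
    apply h
    unfold T
    rw [ENNReal.tsum_eq_zero]
    intro w
    rw [if_neg]
    rintro ⟨h1, h2, h3⟩
    exact hcon w h1 h2 h3
  obtain ⟨w, rfl, rfl, rfl⟩ := this
  exact ⟨edge_word s w, supp_word s w⟩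

/-- changed downs -/
def updA (y s : ℤ) (a : ℤ → ℕ) (u v : ℕ) : ℤ → ℕ := fun z =>
  if z = y + 2 then u + (if y + 1 < s then 1 else 0) else if z = y - 1 then v else a z

/-- changed ups -/
def updB (y s : ℤ) (b : ℤ → ℕ) (u v : ℕ) : ℤ → ℕ := fun z =>
  if z = y + 1 then u else if z = y - 2 then v + (if s < y - 1 then 1 else 0) else b z

theorem edge_upd (y s : ℤ) (a b : ℤ → ℕ) (u v : ℕ) (hE : Edge y s a b) :
    Edge y s (updA y s a u v) (updB y s b u v) := by
  intro z
  have := hE z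
  unfold updA updB
  by_cases h1 : z = y + 1
  · subst h1
    rw [if_pos (by ring), if_pos rfl]
    split_ifs <;> omega
  · by_cases h2 : z = y - 2
    · subst h2
      rw [if_neg (show ¬ y - 2 + 1 = y + 2 by omega), if_pos (show y - 2 + 1 = y - 1 by ring),
        if_neg (show ¬ y - 2 = y + 1 by omega), if_pos rfl]
      split_ifs <;> omega
    · rw [if_neg (by omega), if_neg (by omega), if_neg h1, if_neg h2]
      exact this

theorem upd_self (y s : ℤ) (a b : ℤ → ℕ) (hE : Edge y s a b) :
    updA y s a (b (y + 1)) (a (y - 1)) = a ∧ updB y s b (b (y + 1)) (a (y - 1)) = b := by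
  constructor
  · funext z
    unfold updA
    by_cases h1 : z = y + 2
    · subst h1
      have := hE (y + 1)
      rw [if_pos rfl]
      rw [show y + 1 + 1 = y + 2 by ring] at this
      split_ifs at this ⊢ <;> omega
    · rw [if_neg h1]
      split_ifs with h2
      · rw [h2]
      · rfl
  · funext z
    unfold updB
    by_cases h1 : z = y - 2
    · subst h1
      have := hE (y - 2)
      rw [if_neg (by omega), if_pos rfl]
      rw [show y - 2 + 1 = y - 1 by ring] at this
      split_ifs at this ⊢ <;> omega
    · rw [if_neg h1]
      split_ifs with h2
      · rw [h2]
      · rfl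

/-- extended-real version of `phi` -/
noncomputable def phiE (A B e v : ℕ) : ℝ≥0∞ := ENNReal.ofReal (phi A B e v)

theorem phiE_eq (A B e v : ℕ) : phiE A B e v =
    ((A + v - 1).choose v : ℝ≥0∞) * ((v + e + B - 1).choose B : ℝ≥0∞) * (2⁻¹ * 2⁻¹) ^ v := by
  unfold phiE phi
  rw [ENNReal.ofReal_mul (by positivity), ENNReal.ofReal_mul (by positivity),
    ENNReal.ofReal_pow (by positivity), ENNReal.ofReal_natCast, ENNReal.ofReal_natCast]
  congr 2
  rw [← ENNReal.mul_inv (by simp) (by simp)]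
  rw [one_div, ENNReal.ofReal_inv_of_pos (by norm_num)]
  congr 1
  norm_num

theorem gg_right (y : ℤ) (A B e u : ℕ) :
    gg y (y + 1) A u * gg y (y + 2) (u + e) B = (2⁻¹ : ℝ≥0∞) ^ (A + e + B) * phiE A B e u := by
  rw [phiE_eq]
  unfold gg cf
  rw [if_pos (by omega), if_pos (by omega), mul_pow]
  rw [show A + e + B = A + (e + B) by ring]
  simp only [pow_add]
  ring

theorem gg_left (y : ℤ) (A B e u : ℕ) :
    gg y (y - 1) u A * gg y (y - 2) B (u + e) = (2⁻¹ : ℝ≥0∞) ^ (A + e + B) * phiE A B e u := by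
  rw [phiE_eq]
  unfold gg cf
  rw [if_neg (by omega), if_pos (by omega), if_neg (by omega), if_pos (by omega), mul_pow]
  rw [add_comm u A, add_comm B (u + e)]
  rw [show A + e + B = A + (e + B) by ring]
  simp only [pow_add]
  ring

theorem T_upd (y s : ℤ) (a b : ℤ → ℕ) (hE : Edge y s a b)
    (hJ : ∃ J : Finset ℤ, ∀ z, z ∉ J → a z = 0 ∧ b z = 0) :
    ∃ K : ℝ≥0∞, ∀ u v, T y s (updA y s a u v) (updB y s b u v) = K *
      (phiE (a (y + 1)) (b (y + 2)) (if y + 1 < s then 1 else 0) u *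
       phiE (b (y - 1)) (a (y - 2)) (if s < y - 1 then 1 else 0) v) := by
  obtain ⟨J0, hJ0⟩ := hJ
  let D : Finset ℤ := {y + 1, y + 2, y - 1, y - 2}
  let J := J0 ∪ D
  set e : ℕ := if y + 1 < s then 1 else 0 with he
  set e' : ℕ := if s < y - 1 then 1 else 0 with he'
  refine ⟨(∏ z ∈ J \ D, gg y z (a z) (b z)) * ((2⁻¹ : ℝ≥0∞) ^ (a (y + 1) + e + b (y + 2)) *
    (2⁻¹ : ℝ≥0∞) ^ (b (y - 1) + e' + a (y - 2))), ?_⟩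
  intro u v
  have hJ' : ∀ z, z ∉ J → updA y s a u v z = 0 ∧ updB y s b u v z = 0 := by
    intro z hz
    simp only [J, D, Finset.mem_union, Finset.mem_insert, Finset.mem_singleton, not_or] at hz
    obtain ⟨h1, h2, h3, h4, h5⟩ := hz
    simp only [updA, updB, h2, h3, h4, h5, if_false]
    exact hJ0 z h1
  rw [T_prod y J s _ _ (edge_upd y s a b u v hE) hJ']
  have hD : D ⊆ J := Finset.subset_union_right
  rw [← Finset.prod_sdiff hD]
  have e1 : ∏ z ∈ J \ D, gg y z (updA y s a u v z) (updB y s b u v z) =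
      ∏ z ∈ J \ D, gg y z (a z) (b z) := by
    apply Finset.prod_congr rfl
    intro z hz
    rw [Finset.mem_sdiff] at hz
    have hz := hz.2
    simp only [D, Finset.mem_insert, Finset.mem_singleton, not_or] at hz
    obtain ⟨h2, h3, h4, h5⟩ := hz
    simp only [updA, updB, h2, h3, h4, h5, if_false]
  have e2 : ∏ z ∈ D, gg y z (updA y s a u v z) (updB y s b u v z) =
      (gg y (y + 1) (a (y + 1)) u * gg y (y + 2) (u + e) (b (y + 2))) *
      (gg y (y - 1) v (b (y - 1)) * gg y (y - 2) (a (y - 2)) (v + e')) := by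
    simp only [D]
    rw [Finset.prod_insert (by simp; omega), Finset.prod_insert (by simp; omega),
      Finset.prod_insert (by simp), Finset.prod_singleton]
    have a1 : updA y s a u v (y + 1) = a (y + 1) := by
      unfold updA; rw [if_neg (by omega), if_neg (by omega)]
    have a2 : updA y s a u v (y + 2) = u + e := by
      unfold updA; rw [if_pos (by omega)]
    have a3 : updA y s a u v (y - 1) = v := by
      unfold updA; rw [if_neg (by omega), if_pos (by omega)]
    have a4 : updA y s a u v (y - 2) = a (y - 2) := by
      unfold updA; rw [if_neg (by omega), if_neg (by omega)]
    have b1 : updB y s b u v (y + 1) = u := by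
      unfold updB; rw [if_pos (by omega)]
    have b2 : updB y s b u v (y + 2) = b (y + 2) := by
      unfold updB; rw [if_neg (by omega), if_neg (by omega)]
    have b3 : updB y s b u v (y - 1) = b (y - 1) := by
      unfold updB; rw [if_neg (by omega), if_neg (by omega)]
    have b4 : updB y s b u v (y - 2) = v + e' := by
      unfold updB; rw [if_neg (by omega), if_pos (by omega)]
    rw [a1, a2, a3, a4, b1, b2, b3, b4]
    ring
  rw [e1, e2, gg_right, gg_left]
  ring

theorem phiE_lemma (A B e u r J : ℕ) (hr : r ≤ A + u) (hJ : 32 * J ^ 2 ≤ r) :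
    ((J : ℝ≥0∞) + 1) * phiE A B e u ≤ 2 * ∑' v, phiE A B e v := by
  have h := ENNReal.ofReal_le_ofReal (phi_lemma A B e u r J hr hJ)
  rw [ENNReal.ofReal_mul (by positivity), ENNReal.ofReal_mul (by positivity),
    ENNReal.ofReal_sum_of_nonneg (fun v _ => phi_nonneg A B e v),
    ENNReal.ofReal_add (by positivity) (by positivity)] at h
  simp only [ENNReal.ofReal_natCast, ENNReal.ofReal_one, ENNReal.ofReal_ofNat] at h
  refine le_trans h ?_
  gcongr
  exact ENNReal.sum_le_tsum _

theorem T_bound (y s : ℤ) (a b : ℤ → ℕ) (r J : ℕ)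
    (h1 : r ≤ a (y + 1) + b (y + 1)) (h2 : r ≤ a (y - 1) + b (y - 1)) (hJ : 32 * J ^ 2 ≤ r) :
    ((J : ℝ≥0∞) + 1) ^ 2 * T y s a b ≤
      4 * ∑' p : ℕ × ℕ, T y s (updA y s a p.1 p.2) (updB y s b p.1 p.2) := by
  by_cases h0 : T y s a b = 0
  · rw [h0]; simp
  obtain ⟨hE, hS⟩ := T_ne_zero y s a b h0
  obtain ⟨K, hK⟩ := T_upd y s a b hE hS
  have hself := hK (b (y + 1)) (a (y - 1))
  rw [(upd_self y s a b hE).1, (upd_self y s a b hE).2] at hself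
  rw [hself]
  simp only [hK]
  rw [ENNReal.tsum_prod']
  simp only [ENNReal.tsum_mul_left, ENNReal.tsum_mul_right]
  have k1 := phiE_lemma (a (y + 1)) (b (y + 2)) (if y + 1 < s then 1 else 0) (b (y + 1)) r J h1 hJ
  have k2 := phiE_lemma (b (y - 1)) (a (y - 2)) (if s < y - 1 then 1 else 0) (a (y - 1)) r J
    (by omega) hJ
  have k := mul_le_mul' k1 k2
  calc _ = K * (((J : ℝ≥0∞) + 1) * phiE (a (y + 1)) (b (y + 2)) (if y + 1 < s then 1 else 0) (b (y + 1)) *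
        (((J : ℝ≥0∞) + 1) * phiE (b (y - 1)) (a (y - 2)) (if s < y - 1 then 1 else 0) (a (y - 1)))) := by
        ring
    _ ≤ _ := (mul_le_mul' le_rfl k).trans (le_of_eq (by ring))

open Classical in
theorem tsum_inj_le {α β : Type*} (P : α → Prop) (Q : β → Prop) (g : α → β) (f : β → ℝ≥0∞)
    (hPQ : ∀ x, P x → Q (g x)) (hinj : ∀ x x', P x → P x' → g x = g x' → x = x') :
    ∑' x, (if P x then f (g x) else 0) ≤ ∑' y, if Q y then f y else 0 := by
  have e1 : ∑' x, (if P x then f (g x) else 0) = ∑' x : {x // P x}, f (g x) := by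
    rw [show (fun x => if P x then f (g x) else 0) = Set.indicator {x | P x} (fun x => f (g x)) by
      funext x; simp [Set.indicator]]
    rw [← tsum_subtype]
    rfl
  have e2 : ∑' y, (if Q y then f y else 0) = ∑' y : {y // Q y}, f y := by
    rw [show (fun y => if Q y then f y else 0) = Set.indicator {x | Q x} f by
      funext x; simp [Set.indicator]]
    rw [← tsum_subtype]
    rfl
  rw [e1, e2]
  have : Function.Injective (fun x : {x // P x} => (⟨g x, hPQ x x.2⟩ : {y // Q y})) := by
    intro x x' h
    apply Subtype.ext
    apply hinj _ _ x.2 x'.2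
    simpa using h
  exact ENNReal.tsum_comp_le_tsum_of_injective this (fun y : {y // Q y} => f y)

open Classical in
/-- grouping words by endpoint and departures -/
theorem Sm_group (s : ℤ) (P : List Bool → Prop) (F : ℤ → (ℤ → ℕ) → (ℤ → ℕ) → Prop)
    (hP : ∀ w, P w ↔ F (pos s w) (dn s w) (up s w)) :
    Sm P = ∑' p : ℤ × (ℤ → ℕ) × (ℤ → ℕ), if F p.1 p.2.1 p.2.2 then T p.1 s p.2.1 p.2.2 else 0 := by
  have e1 : ∀ p : ℤ × (ℤ → ℕ) × (ℤ → ℕ), (if F p.1 p.2.1 p.2.2 then T p.1 s p.2.1 p.2.2 else 0) =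
      ∑' w, if p = (pos s w, dn s w, up s w) then (if P w then wt w else 0) else 0 := by
    rintro ⟨y, a, b⟩
    unfold T
    split_ifs with h
    · apply tsum_congr
      intro w
      by_cases hw : pos s w = y ∧ dn s w = a ∧ up s w = b
      · obtain ⟨rfl, rfl, rfl⟩ := hw
        simp [(hP w).mpr h]
      · rw [if_neg hw, if_neg]
        intro h3
        simp only [Prod.mk.injEq] at h3
        exact hw ⟨h3.1.symm, h3.2.1.symm, h3.2.2.symm⟩
    · symm
      rw [ENNReal.tsum_eq_zero]
      intro w
      split_ifs with h1 h2
      · exfalso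
        simp only [Prod.mk.injEq] at h1
        obtain ⟨rfl, rfl, rfl⟩ := h1
        exact h ((hP w).mp h2)
      · rfl
      · rfl
  simp only [e1]
  rw [ENNReal.tsum_comm]
  unfold Sm
  apply tsum_congr
  intro w
  rw [tsum_ite_eq]

/-- `Gam` in terms of departures -/
def FG (l0 : ℤ → ℕ) (h : ℕ) (y : ℤ) (a b : ℤ → ℕ) : Prop :=
  ∀ z, if y - 1 ≤ z ∧ z ≤ y + 1 then l0 z + (b (z - 1) + a (z + 1)) = h
    else l0 z + (b (z - 1) + a (z + 1)) < h

/-- `Dom` in terms of departures -/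
def FD (l0 : ℤ → ℕ) (h : ℕ) (y : ℤ) (a b : ℤ → ℕ) : Prop :=
  ∀ z, (z = y → l0 z + (b (z - 1) + a (z + 1)) = h) ∧
    (z < y - 2 ∨ y + 2 < z → l0 z + (b (z - 1) + a (z + 1)) < h)

theorem Gam_iff (l0 : ℤ → ℕ) (s : ℤ) (h : ℕ) (w : List Bool) :
    Gam l0 s h w ↔ FG l0 h (pos s w) (dn s w) (up s w) := by
  unfold Gam FG
  simp only [vis_eq]

theorem Dom_iff (l0 : ℤ → ℕ) (s : ℤ) (h : ℕ) (w : List Bool) :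
    Dom l0 s h w ↔ FD l0 h (pos s w) (dn s w) (up s w) := by
  unfold Dom FD
  simp only [vis_eq]

theorem FG_FD (l0 : ℤ → ℕ) (h : ℕ) (y s : ℤ) (a b : ℤ → ℕ) (u v : ℕ) (hF : FG l0 h y a b) :
    FD l0 h y (updA y s a u v) (updB y s b u v) := by
  intro z
  have hz := hF z
  refine ⟨fun hy => ?_, fun hy => ?_⟩
  · subst hy
    rw [if_pos (by omega)] at hz
    simp only [updA, updB]
    rw [if_neg (by omega), if_neg (by omega), if_neg (by omega), if_neg (by omega)]
    exact hz
  · rw [if_neg (by omega)] at hz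
    simp only [updA, updB]
    rw [if_neg (by omega), if_neg (by omega), if_neg (by omega), if_neg (by omega)]
    exact hz

theorem FG_inj (l0 : ℤ → ℕ) (h : ℕ) (y s : ℤ) (a b a' b' : ℤ → ℕ) (u v u' v' : ℕ)
    (hF : FG l0 h y a b) (hE : Edge y s a b) (hF' : FG l0 h y a' b') (hE' : Edge y s a' b')
    (hA : updA y s a u v = updA y s a' u' v') (hB : updB y s b u v = updB y s b' u' v') :
    a = a' ∧ b = b' ∧ u = u' ∧ v = v' := by
  have hu : u = u' := by simpa [updB] using congrFun hB (y + 1)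
  have hv : v = v' := by
    have := congrFun hA (y - 1)
    simpa [updA, show y - 1 ≠ y + 2 by omega] using this
  have ha : ∀ z, z ≠ y + 2 → z ≠ y - 1 → a z = a' z := by
    intro z h1 h2
    have := congrFun hA z
    simpa [updA, h1, h2] using this
  have hb : ∀ z, z ≠ y + 1 → z ≠ y - 2 → b z = b' z := by
    intro z h1 h2
    have := congrFun hB z
    simpa [updB, h1, h2] using this
  have p1 := hF (y + 1)
  have p1' := hF' (y + 1)
  have p2 := hF (y - 1)
  have p2' := hF' (y - 1)
  rw [if_pos (by omega)] at p1 p1' p2 p2'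
  rw [show y + 1 - 1 = y by ring, show y + 1 + 1 = y + 2 by ring] at p1 p1'
  rw [show y - 1 - 1 = y - 2 by ring, show y - 1 + 1 = y by ring] at p2 p2'
  have q1 := hb y (by omega) (by omega)
  have q2 := ha y (by omega) (by omega)
  have r1 : a (y + 2) = a' (y + 2) := by omega
  have r2 : b (y - 2) = b' (y - 2) := by omega
  have s1 := hE (y + 1)
  have s1' := hE' (y + 1)
  have s2 := hE (y - 2)
  have s2' := hE' (y - 2)
  rw [show y + 1 + 1 = y + 2 by ring] at s1 s1'
  rw [show y - 2 + 1 = y - 1 by ring] at s2 s2'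
  have r3 : b (y + 1) = b' (y + 1) := by split_ifs at s1 s1' <;> omega
  have r4 : a (y - 1) = a' (y - 1) := by split_ifs at s2 s2' <;> omega
  refine ⟨?_, ?_, hu, hv⟩
  · funext z
    by_cases h1 : z = y + 2
    · rw [h1, r1]
    by_cases h2 : z = y - 1
    · rw [h2, r4]
    exact ha z h1 h2
  · funext z
    by_cases h1 : z = y + 1
    · rw [h1, r3]
    by_cases h2 : z = y - 2
    · rw [h2, r2]
    exact hb z h1 h2

open Classical in
theorem upper (l0 : ℤ → ℕ) (s : ℤ) (h r : ℕ) (hr : ∀ z, l0 z + r ≤ h) :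
    (r : ℝ≥0∞) * Sm (Gam l0 s h) ≤ 640 := by
  obtain ⟨J, hJ1, hJ2⟩ : ∃ J : ℕ, 32 * J ^ 2 ≤ r ∧ r ≤ 32 * (J + 1) ^ 2 := by
    refine ⟨Nat.sqrt (r / 32), ?_, ?_⟩
    · have := Nat.sqrt_le' (r / 32)
      omega
    · have := Nat.lt_succ_sqrt' (r / 32)
      simp only [Nat.succ_eq_add_one] at this
      omega
  have key : ((J : ℝ≥0∞) + 1) ^ 2 * Sm (Gam l0 s h) ≤ 4 * Sm (Dom l0 s h) := by
    rw [Sm_group s _ _ (Gam_iff l0 s h), Sm_group s _ _ (Dom_iff l0 s h)]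
    rw [← ENNReal.tsum_mul_left]
    have step1 : ∀ p : ℤ × (ℤ → ℕ) × (ℤ → ℕ),
        ((J : ℝ≥0∞) + 1) ^ 2 * (if FG l0 h p.1 p.2.1 p.2.2 then T p.1 s p.2.1 p.2.2 else 0) ≤
        4 * ∑' q : ℕ × ℕ, (if FG l0 h p.1 p.2.1 p.2.2 ∧ Edge p.1 s p.2.1 p.2.2 then
          T p.1 s (updA p.1 s p.2.1 q.1 q.2) (updB p.1 s p.2.2 q.1 q.2) else 0) := by
      rintro ⟨y, a, b⟩
      simp only
      by_cases hF : FG l0 h y a b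
      · by_cases hE : Edge y s a b
        · simp only [hF, hE, and_self, if_true]
          have p1 := hF (y + 1)
          have p2 := hF (y - 1)
          rw [if_pos (by omega)] at p1 p2
          have q1 := hr (y + 1)
          have q2 := hr (y - 1)
          rw [show y + 1 - 1 = y by ring, show y + 1 + 1 = y + 2 by ring] at p1
          rw [show y - 1 - 1 = y - 2 by ring, show y - 1 + 1 = y by ring] at p2
          have s1 := hE (y + 1)
          have s2 := hE (y - 2)
          have s3 := hE y
          have s4 := hE (y - 1)
          rw [show y + 1 + 1 = y + 2 by ring] at s1
          rw [show y - 2 + 1 = y - 1 by ring] at s2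
          rw [show y - 1 + 1 = y by ring] at s4
          apply T_bound y s a b r J _ _ hJ1
          · split_ifs at s1 s3 <;> omega
          · split_ifs at s2 s4 <;> omega
        · have : T y s a b = 0 := by
            by_contra h0
            exact hE (T_ne_zero y s a b h0).1
          simp [this]
      · simp [hF]
    refine le_trans (ENNReal.tsum_le_tsum step1) ?_
    rw [ENNReal.tsum_mul_left, ← ENNReal.tsum_prod]
    gcongr
    have := tsum_inj_le (α := (ℤ × (ℤ → ℕ) × (ℤ → ℕ)) × (ℕ × ℕ)) (β := ℤ × (ℤ → ℕ) × (ℤ → ℕ))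
      (fun x => FG l0 h x.1.1 x.1.2.1 x.1.2.2 ∧ Edge x.1.1 s x.1.2.1 x.1.2.2)
      (fun p => FD l0 h p.1 p.2.1 p.2.2)
      (fun x => (x.1.1, updA x.1.1 s x.1.2.1 x.2.1 x.2.2, updB x.1.1 s x.1.2.2 x.2.1 x.2.2))
      (fun p => T p.1 s p.2.1 p.2.2) ?_ ?_
    · refine le_trans (le_of_eq ?_) (le_trans this (le_of_eq ?_))
      · congr!
      · congr!
    · rintro ⟨⟨y, a, b⟩, u, v⟩ ⟨hF, hE⟩
      exact FG_FD l0 h y s a b u v hF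
    · rintro ⟨⟨y, a, b⟩, u, v⟩ ⟨⟨y', a', b'⟩, u', v'⟩ ⟨hF, hE⟩ ⟨hF', hE'⟩ heq
      simp only [Prod.mk.injEq] at heq hF hE hF' hE'
      obtain ⟨rfl, hA, hB⟩ := heq
      obtain ⟨rfl, rfl, rfl, rfl⟩ := FG_inj l0 h y s a b a' b' u v u' v' hF hE hF' hE' hA hB
      rfl
  have h32 : (r : ℝ≥0∞) ≤ 32 * ((J : ℝ≥0∞) + 1) ^ 2 := by exact_mod_cast hJ2
  calc (r : ℝ≥0∞) * Sm (Gam l0 s h) ≤ 32 * ((J : ℝ≥0∞) + 1) ^ 2 * Sm (Gam l0 s h) := by gcongr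
    _ = 32 * (((J : ℝ≥0∞) + 1) ^ 2 * Sm (Gam l0 s h)) := by ring
    _ ≤ 32 * (4 * Sm (Dom l0 s h)) := by gcongr
    _ ≤ 32 * (4 * 5) := by gcongr; exact Sm_dom l0 s h
    _ = 640 := by norm_num

end Fav3


end FavPart3

section FavPart4

open scoped ENNReal

namespace Fav3

theorem hasSum_of_eq {f g : ℕ → ℝ} {a b : ℝ} (h : HasSum g b) (e1 : ∀ u, f u = g u) (e2 : a = b) :
    HasSum f a := by
  have : f = g := funext e1
  rw [this, e2]; exact h

theorem centralBinom_lower (m : ℕ) (hm : 1 ≤ m) : (16 : ℝ) ^ m ≤ (Nat.centralBinom m : ℝ) ^ 2 * (4 * m) := by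
  induction m, hm using Nat.le_induction with
  | base => simp [Nat.centralBinom, Nat.choose]; norm_num
  | succ m hm ih =>
    have h := Nat.succ_mul_centralBinom_succ m
    have h' : ((m : ℝ) + 1) * (Nat.centralBinom (m + 1) : ℝ) = 2 * (2 * m + 1) * Nat.centralBinom m := by
      exact_mod_cast h
    set c := (Nat.centralBinom m : ℝ)
    set c' := (Nat.centralBinom (m + 1) : ℝ)
    have hm' : (1 : ℝ) ≤ m := by exact_mod_cast hm
    have h2 : ((m : ℝ) + 1) ^ 2 * c' ^ 2 = 4 * (2 * m + 1) ^ 2 * c ^ 2 := by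
      have := congrArg (fun x => x ^ 2) h'
      beta_reduce at this
      nlinarith
    have h3 : ((m : ℝ) + 1) * (16 ^ (m + 1)) ≤ (m + 1) * (c' ^ 2 * (4 * ((m : ℝ) + 1))) := by
      have : ((m : ℝ) + 1) * (c' ^ 2 * (4 * ((m : ℝ) + 1))) = 16 * (2 * m + 1) ^ 2 * c ^ 2 := by
        linear_combination 4 * h2
      rw [this, pow_succ]
      have hc : 0 ≤ c ^ 2 := sq_nonneg _
      calc ((m : ℝ) + 1) * (16 ^ m * 16) ≤ ((m : ℝ) + 1) * ((c ^ 2 * (4 * m)) * 16) := by gcongr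
        _ = 16 * (4 * m * (m + 1)) * c ^ 2 := by ring
        _ ≤ _ := by
          apply mul_le_mul_of_nonneg_right _ hc
          nlinarith
    have := le_of_mul_le_mul_left h3 (by linarith)
    push_cast
    exact this

/-- binomial weight -/
noncomputable def bw (n k : ℕ) : ℝ := (n.choose k : ℝ) * (1 / 2) ^ n

theorem bw_nonneg (n k : ℕ) : 0 ≤ bw n k := by unfold bw; positivity

theorem bw_center (n : ℕ) (hn : 1 ≤ n) : 1 ≤ bw n (n / 2) ^ 2 * (2 * (n + 1)) := by
  unfold bw
  have key : (4 : ℝ) ^ n ≤ (n.choose (n / 2) : ℝ) ^ 2 * (2 * (n + 1)) := by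
    rcases Nat.even_or_odd' n with ⟨m, rfl | rfl⟩
    · have h := centralBinom_lower m (by omega)
      rw [show 2 * m / 2 = m by omega]
      rw [Nat.centralBinom] at h
      rw [pow_mul]
      norm_num at h ⊢
      nlinarith [sq_nonneg ((2 * m).choose m : ℝ)]
    · have h := centralBinom_lower (m + 1) (by omega)
      rw [show (2 * m + 1) / 2 = m by omega]
      have h2 : Nat.centralBinom (m + 1) = 2 * (2 * m + 1).choose m := by
        rw [Nat.centralBinom, show 2 * (m + 1) = 2 * m + 1 + 1 by ring, Nat.choose_succ_succ,
          Nat.choose_symm_half]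
        have := Nat.choose_symm_half m
        omega
      rw [h2] at h
      have h4 : (4 : ℝ) ^ (2 * m + 1) = 16 ^ (m + 1) / 4 := by
        rw [pow_succ, pow_mul, pow_succ]; norm_num; ring
      rw [h4]
      push_cast at h ⊢
      nlinarith
  have h2 : ((1 / 2 : ℝ) ^ n) ^ 2 * 4 ^ n = 1 := by
    rw [← pow_mul, mul_comm n 2, pow_mul, ← mul_pow]; norm_num
  rw [mul_pow]
  calc (1 : ℝ) = ((1 / 2 : ℝ) ^ n) ^ 2 * 4 ^ n := h2.symm
    _ ≤ ((1 / 2 : ℝ) ^ n) ^ 2 * ((n.choose (n / 2) : ℝ) ^ 2 * (2 * (n + 1))) := by gcongr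
    _ = _ := by ring

theorem bw_local_aux (n k q : ℕ) (hq : 1 ≤ q) (h1 : 200 * q ^ 2 ≤ n) (h2 : n ≤ 1600 * q ^ 2)
    (hk : 2 * k ≤ n) (hk2 : n ≤ 2 * k + 8 * q) : 1 / (120 * (q : ℝ)) ≤ bw n k := by
  have hq' : (1 : ℝ) ≤ q := by exact_mod_cast hq
  have h1' : (200 : ℝ) * q ^ 2 ≤ n := by exact_mod_cast h1
  have h2' : (n : ℝ) ≤ 1600 * q ^ 2 := by exact_mod_cast h2
  have hk' : (2 : ℝ) * k ≤ n := by exact_mod_cast hk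
  have hk2' : (n : ℝ) ≤ 2 * k + 8 * q := by exact_mod_cast hk2
  have hn0 : (0 : ℝ) < n := by nlinarith
  have hn1 : 1 ≤ n := by exact_mod_cast hn0
  set x : ℝ := 16 * q / n with hx
  have hxn : x * n = 16 * q := by rw [hx]; field_simp
  have hx0 : 0 ≤ x := by positivity
  have hstep : ∀ j, k ≤ j → 2 * (j + 1) ≤ n → (1 - x) * bw n (j + 1) ≤ bw n j := by
    intro j hj hjn
    have hj' : (k : ℝ) ≤ j := by exact_mod_cast hj
    have hjn' : (2 : ℝ) * (j + 1) ≤ n := by exact_mod_cast hjn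
    have hc := Nat.choose_succ_right_eq n j
    have hc' : (n.choose (j + 1) : ℝ) * (j + 1) = n.choose j * (n - j) := by
      have : ((n - j : ℕ) : ℝ) = n - j := by
        rw [Nat.cast_sub (by omega)]
      rw [← this]; exact_mod_cast hc
    have hd : (0 : ℝ) < n - j := by linarith
    have hr : (1 - x) * (n - j) ≤ j + 1 := by
      have : x * (n - j) ≥ 8 * q := by nlinarith
      nlinarith
    have hb : bw n (j + 1) * (j + 1) = bw n j * (n - j) := by
      unfold bw; linear_combination (1 / 2 : ℝ) ^ n * hc'
    have : ((1 - x) * bw n (j + 1)) * (n - j) ≤ bw n j * (n - j) := by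
      rw [← hb]
      have := bw_nonneg n (j + 1)
      nlinarith
    exact le_of_mul_le_mul_right this hd
  have hx1 : x ≤ 1 / 2 := by
    rw [hx, div_le_iff₀ hn0]; nlinarith
  have hall : ∀ d, k + d ≤ n / 2 → (1 - x) ^ d * bw n (k + d) ≤ bw n k := by
    intro d
    induction d with
    | zero => intro _; simp
    | succ d ih =>
      intro hd
      have h3 := hstep (k + d) (by omega) (by omega)
      refine le_trans ?_ (ih (by omega))
      calc _ = (1 - x) ^ d * ((1 - x) * bw n (k + d + 1)) := by rw [pow_succ]; ring_nf
        _ ≤ _ := by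
          apply mul_le_mul_of_nonneg_left h3
          apply pow_nonneg; linarith
  have hd := hall (n / 2 - k) (by omega)
  rw [show k + (n / 2 - k) = n / 2 by omega] at hd
  have hd4 : ((n / 2 - k : ℕ) : ℝ) ≤ 4 * q := by
    have : n / 2 - k ≤ 4 * q := by omega
    exact_mod_cast this
  have hber := one_add_mul_le_pow (show (-2 : ℝ) ≤ -x by linarith) (n / 2 - k)
  have hhalf : 1 / 2 ≤ (1 - x) ^ (n / 2 - k) := by
    have : ((n / 2 - k : ℕ) : ℝ) * x ≤ 1 / 2 := by
      calc _ ≤ 4 * q * x := by gcongr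
        _ ≤ 1 / 2 := by
          rw [hx, mul_div_assoc', div_le_iff₀ hn0]; nlinarith
    rw [← sub_eq_add_neg] at hber
    linarith
  have hc := bw_center n hn1
  have hb0 := bw_nonneg n (n / 2)
  have hbk : 1 / 2 * bw n (n / 2) ≤ bw n k := le_trans (by gcongr) hd
  have hsq : 1 ≤ (120 * q * bw n k) ^ 2 := by
    have e1 : (1 / 2 * bw n (n / 2)) ^ 2 ≤ bw n k ^ 2 := by gcongr
    have e2 : (2 * ((n : ℝ) + 1)) ≤ 3600 * q ^ 2 := by nlinarith
    calc (1 : ℝ) ≤ bw n (n / 2) ^ 2 * (2 * (n + 1)) := hc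
      _ ≤ bw n (n / 2) ^ 2 * (3600 * q ^ 2) := by gcongr
      _ = 14400 * q ^ 2 * (1 / 2 * bw n (n / 2)) ^ 2 := by ring
      _ ≤ 14400 * q ^ 2 * bw n k ^ 2 := by gcongr
      _ = _ := by ring
  have : 1 ≤ 120 * q * bw n k := by
    have h0 : 0 ≤ 120 * q * bw n k := by
      have := bw_nonneg n k
      positivity
    by_contra hcon
    push Not at hcon
    nlinarith
  rw [div_le_iff₀ (by positivity)]
  linarith

theorem bw_local (n k q : ℕ) (hq : 1 ≤ q) (h1 : 200 * q ^ 2 ≤ n) (h2 : n ≤ 1600 * q ^ 2)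
    (hk : n ≤ 2 * k + 8 * q) (hk2 : 2 * k ≤ n + 8 * q) : 1 / (120 * (q : ℝ)) ≤ bw n k := by
  have hkn : k ≤ n := by nlinarith
  rcases le_or_gt (2 * k) n with h | h
  · exact bw_local_aux n k q hq h1 h2 h hk
  · have := bw_local_aux n (n - k) q hq h1 h2 (by omega) (by omega)
    unfold bw at this ⊢
    rwa [Nat.choose_symm hkn] at this

/-- negative binomial weight -/
noncomputable def nb (m u : ℕ) : ℝ := ((m + u - 1).choose u : ℝ) * (1 / 2) ^ (m + u)

theorem nb_nonneg (m u : ℕ) : 0 ≤ nb m u := by unfold nb; positivity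

theorem nb_bw (m u : ℕ) (hm : 1 ≤ m) : nb m u = 1 / 2 * bw (m + u - 1) u := by
  unfold nb bw
  obtain ⟨n, hn⟩ : ∃ n, m + u = n + 1 := ⟨m + u - 1, by omega⟩
  rw [hn, pow_succ]
  simp
  ring

theorem nb_gf (m : ℕ) (s : ℝ) (hs0 : 0 ≤ s) (hs1 : s ≤ 1) :
    HasSum (fun u => nb m u * s ^ u) ((1 / (2 - s)) ^ m) := by
  rcases Nat.eq_zero_or_pos m with hm | hm
  · subst hm
    have : (fun u => nb 0 u * s ^ u) = fun u => if u = 0 then 1 else 0 := by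
      funext u
      unfold nb
      split_ifs with h
      · subst h; simp
      · rw [Nat.choose_eq_zero_of_lt (show 0 + u - 1 < u by omega)]; simp
    rw [this, pow_zero]
    exact hasSum_ite_eq 0 1
  · obtain ⟨k, rfl⟩ : ∃ k, m = k + 1 := ⟨m - 1, by omega⟩
    have h := hasSum_choose_mul_geometric_of_norm_lt_one k (r := s / 2)
      (by rw [Real.norm_eq_abs, abs_lt]; constructor <;> linarith)
    have h2 := h.mul_left ((1 / 2 : ℝ) ^ (k + 1))
    refine hasSum_of_eq h2 (fun u => ?_) ?_
    · unfold nb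
      show (((k + 1 + u - 1).choose u : ℕ) : ℝ) * _ * _ = _
      rw [show k + 1 + u - 1 = u + k by omega, ← Nat.choose_symm_add]
      rw [pow_add, div_eq_mul_inv s 2, mul_pow, one_div]
      ring
    · have : (2 - s) ≠ 0 := by linarith
      have h3 : 1 - s / 2 = (2 - s) / 2 := by ring
      rw [h3, div_pow, div_pow, div_pow, one_pow]
      field_simp

theorem nb_sum (m : ℕ) : HasSum (fun u => nb m u) 1 := by
  have := nb_gf m 1 (by norm_num) le_rfl
  norm_num at this
  exact this

theorem nb_mean (m : ℕ) : HasSum (fun u => nb m u * u) m := by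
  have h := (nb_sum (m + 1)).mul_left (m : ℝ)
  rw [mul_one] at h
  rw [← hasSum_nat_add_iff' 1]
  simp only [Finset.range_one, Finset.sum_singleton, Nat.cast_zero, mul_zero, sub_zero]
  refine hasSum_of_eq h (fun u => ?_) rfl
  unfold nb
  rw [show m + (u + 1) = m + 1 + u by ring, show m + 1 + u - 1 = m + u by omega]
  have h1 := Nat.choose_succ_right_eq (m + u) u
  rw [show m + u - u = m by omega] at h1
  have h2 : ((m + u).choose (u + 1) : ℝ) * ((u + 1 : ℕ) : ℝ) = (m + u).choose u * m := by exact_mod_cast h1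
  linear_combination (1 / 2 : ℝ) ^ (m + 1 + u) * h2

theorem nb_step (m b : ℕ) (F G : ℕ → ℝ) (A : ℝ) (hF : ∀ u, u < b → G u ≤ F u)
    (hG : ∀ u, b ≤ u → G u ≤ 0) (hS : HasSum (fun u => nb m u * G u) A) :
    A ≤ ∑ u ∈ Finset.range b, nb m u * F u := by
  have h1 : A ≤ ∑ u ∈ Finset.range b, nb m u * G u := by
    have h2 := hS.neg
    have h3 := sum_le_hasSum (Finset.range b) (f := fun u => -(nb m u * G u)) (fun u hu => by
      simp at hu
      have := mul_nonneg (nb_nonneg m u) (neg_nonneg.mpr (hG u hu))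
      linarith) h2
    rw [Finset.sum_neg_distrib] at h3
    linarith
  refine le_trans h1 ?_
  apply Finset.sum_le_sum
  intro u hu
  apply mul_le_mul_of_nonneg_left (hF u (by simpa using hu)) (nb_nonneg m u)

/-- survival weights below level `b` with immigration `e` -/
noncomputable def fr (b : ℕ) : ℕ → (ℕ → ℕ) → ℕ → ℝ
  | 0, _, m => if m = 0 then 1 else 0
  | N + 1, e, m => ∑ u ∈ Finset.range b, nb (m + e 0) u * fr b N (fun k => e (k + 1)) u

theorem fr_nonneg (b : ℕ) : ∀ (N : ℕ) (e : ℕ → ℕ) (m : ℕ), 0 ≤ fr b N e m := by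
  intro N
  induction N with
  | zero => intro e m; unfold fr; split_ifs <;> norm_num
  | succ N ih =>
    intro e m
    unfold fr
    exact Finset.sum_nonneg fun u _ => mul_nonneg (nb_nonneg _ _) (ih _ _)

theorem fr_zero_lower (b : ℕ) (hb : 1 ≤ b) (N : ℕ) : ∀ m : ℕ,
    ((N : ℝ) / (N + 1)) ^ m - m / b ≤ fr b N (fun _ => 0) m := by
  have hb' : (1 : ℝ) ≤ b := by exact_mod_cast hb
  induction N with
  | zero =>
    intro m
    unfold fr
    rcases Nat.eq_zero_or_pos m with h | h
    · subst h; simp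
    · rw [if_neg (by omega)]
      simp only [Nat.cast_zero, zero_div]
      rw [zero_pow (by omega)]
      have : (0 : ℝ) ≤ m / b := by positivity
      linarith
  | succ N ih =>
    intro m
    have hN : (0 : ℝ) ≤ N := by positivity
    set s : ℝ := (N : ℝ) / (N + 1) with hs
    have hs0 : 0 ≤ s := by positivity
    have hs1 : s ≤ 1 := by rw [hs, div_le_one (by linarith)]; linarith
    have hsum : HasSum (fun u => nb m u * (s ^ u - u / b)) ((1 / (2 - s)) ^ m - m / b) := by
      have := (nb_gf m s hs0 hs1).sub ((nb_mean m).mul_right (b : ℝ)⁻¹)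
      refine hasSum_of_eq this (fun u => ?_) (by rw [div_eq_mul_inv (m : ℝ)])
      rw [div_eq_mul_inv]; ring
    have := nb_step m b (fun u => fr b N (fun _ => 0) u) (fun u => s ^ u - u / b) _
      (fun u _ => ih u) (fun u hu => by
        have h1 : s ^ u ≤ 1 := pow_le_one₀ hs0 hs1
        have h2 : (1 : ℝ) ≤ u / b := by
          rw [le_div_iff₀ (by linarith), one_mul]; exact_mod_cast hu
        show s ^ u - u / b ≤ 0
        linarith) hsum
    have e1 : 1 / (2 - s) = ((N + 1 : ℕ) : ℝ) / ((N + 1 : ℕ) + 1) := by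
      have e0 : 2 - s = (N + 2) / (N + 1) := by rw [hs]; field_simp; ring
      rw [e0]; push_cast; rw [one_div, inv_div]; congr 1; ring
    rw [e1] at this
    exact this

/-- immigration during the first `j` steps -/
def ej (j : ℕ) : ℕ → ℕ := fun k => if k < j then 1 else 0

theorem ej_zero : ej 0 = fun _ => 0 := by funext k; simp [ej]

theorem ej_succ (j : ℕ) : (fun k => ej (j + 1) (k + 1)) = ej j := by
  funext k; simp [ej]

theorem fr_claimA (b N j : ℕ) (hb : 1 ≤ b) (θ : ℝ) (hθ : θ = 1 / b + 1 / (N + 1)) : ∀ m : ℕ,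
    1 - (m + j) * θ ≤ fr b (N + j) (ej j) m := by
  have hb' : (1 : ℝ) ≤ b := by exact_mod_cast hb
  have hN : (0 : ℝ) ≤ N := by positivity
  have hθ0 : 0 ≤ θ := by rw [hθ]; positivity
  induction j with
  | zero =>
    intro m
    have h := fr_zero_lower b hb N m
    rw [ej_zero]
    refine le_trans ?_ h
    have h1 := one_add_mul_le_pow (show (-2 : ℝ) ≤ -(1 / (N + 1)) by
      have : (1 : ℝ) / (N + 1) ≤ 1 := by rw [div_le_one (by linarith)]; linarith
      linarith) m
    have h2 : (N : ℝ) / (N + 1) = 1 + -(1 / (N + 1)) := by field_simp; ring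
    rw [h2, hθ]
    push_cast
    have h3 : (m : ℝ) / b = m * (1 / b) := by ring
    rw [h3]
    linarith
  | succ j ih =>
    intro m
    have hsum : HasSum (fun u => nb (m + 1) u * (1 - (u + j) * θ)) (1 - (m + (j + 1 : ℕ)) * θ) := by
      have := ((nb_sum (m + 1)).mul_right (1 - j * θ)).sub ((nb_mean (m + 1)).mul_right θ)
      refine hasSum_of_eq this (fun u => ?_) ?_
      · ring
      · push_cast; ring
    have := nb_step (m + 1) b (fun u => fr b (N + j) (ej j) u) (fun u => 1 - (u + j) * θ) _
      (fun u _ => ih u) (fun u hu => by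
        have h1 : (b : ℝ) ≤ u := by exact_mod_cast hu
        have h2 : 1 ≤ b * θ := by
          rw [hθ, mul_add]
          have : (b : ℝ) * (1 / b) = 1 := by field_simp
          rw [this]
          have : 0 ≤ (b : ℝ) * (1 / (N + 1)) := by positivity
          linarith
        have h3 : (b : ℝ) * θ ≤ (u + j) * θ := by
          apply mul_le_mul_of_nonneg_right _ hθ0
          have : (0 : ℝ) ≤ j := by positivity
          linarith
        show 1 - (u + j) * θ ≤ 0
        linarith) hsum
    refine le_trans this (le_of_eq ?_)
    rw [show N + (j + 1) = N + j + 1 by ring]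
    simp only [fr]
    rw [ej_succ]
    simp [ej]

theorem fr_zero_half (b N : ℕ) (hb : 1 ≤ b) (hN : 2 * b ^ 2 ≤ N + 1) (m : ℕ) (hm : m ≤ b) :
    ((b : ℝ) - m) / (2 * b) ≤ fr b N (fun _ => 0) m := by
  rcases hm.eq_or_lt with h | h
  · subst h; simp; exact fr_nonneg _ _ _ _
  have hA := fr_claimA b N 0 hb _ rfl m
  rw [ej_zero] at hA
  simp only [Nat.cast_zero, add_zero] at hA
  refine le_trans ?_ hA
  have hb' : (1 : ℝ) ≤ b := by exact_mod_cast hb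
  have h' : (m : ℝ) + 1 ≤ b := by exact_mod_cast h
  have hN' : 2 * (b : ℝ) ^ 2 ≤ N + 1 := by exact_mod_cast hN
  have h1 : 1 / ((N : ℝ) + 1) ≤ 1 / (2 * b ^ 2) := by
    apply one_div_le_one_div_of_le _ hN'; positivity
  have h2 : (m : ℝ) * (1 / b + 1 / (N + 1)) ≤ m * (1 / b + 1 / (2 * b ^ 2)) := by gcongr
  have h3 : ((b : ℝ) - m) / (2 * b) + m * (1 / b + 1 / (2 * b ^ 2)) ≤ 1 := by
    have e : ((b : ℝ) - m) / (2 * b) + m * (1 / b + 1 / (2 * b ^ 2)) =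
      ((b - m) * b + m * (2 * b) + m) / (2 * b ^ 2) := by field_simp; ring
    rw [e, div_le_one (by positivity)]
    nlinarith
  linarith

theorem fr_claimB (h b N j : ℕ) (hb : 3 ≤ b) (hN : 2 * b ^ 2 ≤ N + 1) (hb1 : 2 * b ≤ h)
    (hb2 : h ≤ 3 * b) (hh : 16 ≤ h) (hj : 8 * j ≤ h) (t : ℝ) (ht : t = 1 - 8 / h) : ∀ m : ℕ,
    1 / 8 * t ^ m - 1 / 8 * t ^ b ≤ fr b (N + j) (ej j) m := by
  have hb' : (3 : ℝ) ≤ b := by exact_mod_cast hb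
  have hh' : (16 : ℝ) ≤ h := by exact_mod_cast hh
  have hb1' : (2 : ℝ) * b ≤ h := by exact_mod_cast hb1
  have hb2' : (h : ℝ) ≤ 3 * b := by exact_mod_cast hb2
  have hN' : 2 * (b : ℝ) ^ 2 ≤ N + 1 := by exact_mod_cast hN
  set l : ℝ := 8 / h with hl
  have hl0 : 0 < l := by positivity
  have hl1 : l ≤ 1 / 2 := by rw [hl, div_le_iff₀ (by linarith)]; linarith
  have ht0 : 0 ≤ t := by linarith
  have ht1 : t ≤ 1 := by linarith
  have hmono : ∀ u : ℕ, b ≤ u → 1 / 8 * t ^ u - 1 / 8 * t ^ b ≤ 0 := by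
    intro u hu
    have := pow_le_pow_of_le_one ht0 ht1 hu
    linarith
  induction j with
  | zero =>
    intro m
    rcases le_or_gt b m with hm | hm
    · exact le_trans (hmono m hm) (fr_nonneg _ _ _ _)
    · rw [ej_zero]
      refine le_trans ?_ (fr_zero_half b N (by omega) hN m hm.le)
      have h1 : t ^ b = t ^ m * t ^ (b - m) := by rw [← pow_add]; congr 1; omega
      have h2 := one_add_mul_le_pow (show (-2 : ℝ) ≤ -l by linarith) (b - m)
      rw [← sub_eq_add_neg, ← ht, Nat.cast_sub hm.le] at h2
      have h3 : t ^ m ≤ 1 := pow_le_one₀ ht0 ht1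
      have h4 : 0 ≤ t ^ m := pow_nonneg ht0 m
      have hm' : (m : ℝ) < b := by exact_mod_cast hm
      have h5 : t ^ m - t ^ b ≤ ((b : ℝ) - m) * l := by
        rw [h1]
        have : t ^ m * (1 - t ^ (b - m)) ≤ 1 * (((b : ℝ) - m) * l) := by
          apply mul_le_mul h3 (by linarith) _ (by norm_num)
          have : t ^ (b - m) ≤ 1 := pow_le_one₀ ht0 ht1
          linarith
        linarith
      have h6 : l / 8 ≤ 1 / (2 * b) := by
        rw [hl, le_div_iff₀ (by linarith)]
        rw [div_div, div_mul_eq_mul_div, div_le_one (by linarith)]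
        linarith
      calc _ = 1 / 8 * (t ^ m - t ^ b) := by ring
        _ ≤ 1 / 8 * (((b : ℝ) - m) * l) := by gcongr
        _ = ((b : ℝ) - m) * (l / 8) := by ring
        _ ≤ ((b : ℝ) - m) * (1 / (2 * b)) := by
          apply mul_le_mul_of_nonneg_left h6; linarith
        _ = _ := by ring
  | succ j ih =>
    intro m
    have hj8 : (8 : ℝ) * (j + 1) ≤ h := by exact_mod_cast hj
    rcases le_or_gt (1 : ℝ) (m * l) with hm | hm
    · have hsum : HasSum (fun u => nb (m + 1) u * (1 / 8 * t ^ u - 1 / 8 * t ^ b))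
          (1 / 8 * (1 / (2 - t)) ^ (m + 1) - 1 / 8 * t ^ b) := by
        have := ((nb_gf (m + 1) t ht0 ht1).mul_left (1 / 8)).sub
          ((nb_sum (m + 1)).mul_left (1 / 8 * t ^ b))
        refine hasSum_of_eq this (fun u => ?_) ?_
        · ring
        · ring
      have := nb_step (m + 1) b (fun u => fr b (N + j) (ej j) u) _ _
        (fun u _ => ih (by omega) u) hmono hsum
      have e1 : fr b (N + (j + 1)) (ej (j + 1)) m =
          ∑ u ∈ Finset.range b, nb (m + 1) u * fr b (N + j) (ej j) u := by
        rw [show N + (j + 1) = N + j + 1 by ring]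
        simp only [fr]
        rw [ej_succ]
        simp [ej]
      rw [e1]
      refine le_trans ?_ this
      have key : t ^ m ≤ (1 / (2 - t)) ^ (m + 1) := by
        have h2t : 2 - t = 1 + l := by rw [ht]; ring
        rw [h2t, one_div, inv_pow, ← one_div, le_div_iff₀ (by positivity)]
        have h1l : 0 ≤ 1 - l ^ 2 := by nlinarith
        have e2 : t ^ m * (1 + l) ^ (m + 1) = (1 + l) * (1 - l ^ 2) ^ m := by
          rw [pow_succ, ← mul_assoc, ← mul_pow, ht]; ring_nf
        rw [e2]
        have e3 : (1 - l ^ 2) ^ m ≤ Real.exp (-(m * l ^ 2)) := by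
          have h5 := Real.add_one_le_exp (-l ^ 2)
          calc (1 - l ^ 2) ^ m ≤ Real.exp (-l ^ 2) ^ m := by
                apply pow_le_pow_left₀ h1l; linarith
            _ = _ := by rw [← Real.exp_nat_mul]; ring_nf
        have e4 : 1 + l ≤ Real.exp l := by linarith [Real.add_one_le_exp l]
        calc (1 + l) * (1 - l ^ 2) ^ m ≤ Real.exp l * Real.exp (-(m * l ^ 2)) := by
              apply mul_le_mul e4 e3 (pow_nonneg h1l m) (Real.exp_pos l).le
          _ = Real.exp (l + -(m * l ^ 2)) := by rw [Real.exp_add]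
          _ ≤ 1 := by
              rw [Real.exp_le_one_iff]
              nlinarith
      linarith
    · have hA := fr_claimA b N (j + 1) (by omega) _ rfl m
      refine le_trans ?_ hA
      have h1 : 1 / ((N : ℝ) + 1) ≤ 1 / (2 * b ^ 2) := by
        apply one_div_le_one_div_of_le _ hN'; positivity
      have h2 : 1 / (2 * (b : ℝ) ^ 2) ≤ 1 / 6 * (1 / b) := by
        rw [div_mul_div_comm, one_mul]
        apply one_div_le_one_div_of_le (by positivity); nlinarith
      have hm8 : (8 : ℝ) * m ≤ h := by
        rw [hl, mul_div_assoc', div_lt_one (by linarith)] at hm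
        linarith
      have h3 : ((m : ℝ) + (j + 1 : ℕ)) * (1 / b + 1 / (N + 1)) ≤ 7 / 8 := by
        calc _ ≤ ((h : ℝ) / 4) * (1 / b + 1 / 6 * (1 / b)) := by
              apply mul_le_mul
              · push_cast; linarith
              · linarith
              · positivity
              · positivity
          _ = 7 / 24 * (h / b) := by ring
          _ ≤ 7 / 24 * 3 := by
              have : (h : ℝ) / b ≤ 3 := by rw [div_le_iff₀ (by linarith)]; linarith
              gcongr
          _ = 7 / 8 := by norm_num
      have h4 : t ^ m ≤ 1 := pow_le_one₀ ht0 ht1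
      have h5 : 0 ≤ t ^ b := pow_nonneg ht0 b
      linarith

theorem fr_final (h b N j q m : ℕ) (hb : 3 ≤ b) (hN : 2 * b ^ 2 ≤ N + 1) (hb1 : 2 * b ≤ h)
    (hb2 : h ≤ 3 * b) (hh : 16 ≤ h) (hj : 8 * j ≤ h) (hm : m + 2 * q ≤ b) (hq : 16 * q ≤ h) :
    Real.exp (-8) * (q / h) ≤ fr b (N + j) (ej j) m ∧
    Real.exp (-8) * (q / h) ≤ fr b (N + j) (fun _ => 0) m := by
  have hb' : (3 : ℝ) ≤ b := by exact_mod_cast hb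
  have hh' : (16 : ℝ) ≤ h := by exact_mod_cast hh
  have hb1' : (2 : ℝ) * b ≤ h := by exact_mod_cast hb1
  have hq' : (16 : ℝ) * q ≤ h := by exact_mod_cast hq
  have hm' : (m : ℝ) + 2 * q ≤ b := by exact_mod_cast hm
  have hq0 : (0 : ℝ) ≤ q := by positivity
  constructor
  · set l : ℝ := 8 / h with hl
    have hl0 : 0 < l := by positivity
    have hl1 : l ≤ 1 / 2 := by rw [hl, div_le_iff₀ (by linarith)]; linarith
    have hlh : l * h = 8 := by rw [hl]; field_simp
    set t : ℝ := 1 - l with ht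
    have ht0 : 0 < t := by linarith
    have ht1 : t ≤ 1 := by linarith
    have hB := fr_claimB h b N j hb hN hb1 hb2 hh hj t ht m
    refine le_trans ?_ hB
    have e1 : t ^ b ≤ t ^ m * t ^ (2 * q) := by
      rw [← pow_add]; exact pow_le_pow_of_le_one ht0.le ht1 hm
    have e2 : t ^ (2 * q) * (1 + 2 * q * l) ≤ 1 := by
      have h1 := one_add_mul_le_pow (show (-2 : ℝ) ≤ l by linarith) (2 * q)
      push_cast at h1
      calc _ ≤ t ^ (2 * q) * (1 + l) ^ (2 * q) := by gcongr
        _ = (1 - l ^ 2) ^ (2 * q) := by rw [← mul_pow, ht]; ring_nf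
        _ ≤ 1 := by
          apply pow_le_one₀ <;> nlinarith
    have e3 : q * l ≤ 1 - t ^ (2 * q) := by
      have h2 : 2 * q * l ≤ 1 := by
        rw [hl, mul_div_assoc', div_le_one (by linarith)]; linarith
      have h3 : 0 ≤ q * l := by positivity
      have h4 : 0 ≤ t ^ (2 * q) := by positivity
      by_contra hcon
      push Not at hcon
      nlinarith
    have e4 : Real.exp (-8) ≤ t ^ m := by
      have h1 : Real.exp (-(2 * l)) ≤ t := by
        rw [Real.exp_neg, inv_le_comm₀ (Real.exp_pos _) ht0]
        have h2 := Real.add_one_le_exp (2 * l)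
        refine le_trans ?_ h2
        rw [inv_le_iff_one_le_mul₀ ht0]
        nlinarith
      calc Real.exp (-8) ≤ Real.exp (m * (-(2 * l))) := by
            apply Real.exp_le_exp.mpr
            have : (m : ℝ) * 2 ≤ h := by linarith
            nlinarith
        _ = Real.exp (-(2 * l)) ^ m := by rw [← Real.exp_nat_mul]
        _ ≤ _ := by gcongr
    calc Real.exp (-8) * (q / h) = 1 / 8 * (Real.exp (-8) * (q * l)) := by rw [hl]; ring
      _ ≤ 1 / 8 * (t ^ m * (1 - t ^ (2 * q))) := by gcongr
      _ ≤ _ := by linarith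
  · have := fr_zero_half b (N + j) (by omega) (by omega) m (by omega)
    refine le_trans ?_ this
    have h1 : Real.exp (-8) ≤ 1 := Real.exp_le_one_iff.mpr (by norm_num)
    calc _ ≤ 1 * ((q : ℝ) / h) := by gcongr
      _ ≤ (2 * q) / (2 * b) := by
        rw [one_mul, div_le_div_iff₀ (by linarith) (by linarith)]; nlinarith
      _ ≤ _ := by gcongr; linarith

end Fav3


end FavPart4

section FavPart5

open scoped ENNReal

namespace Fav3

/-- prepend -/
def cns (m : ℕ) (f : ℕ → ℕ) : ℕ → ℕ
  | 0 => m
  | k + 1 => f k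

theorem cns_inj {m m' : ℕ} {f f' : ℕ → ℕ} (h : cns m f = cns m' f') : m = m' ∧ f = f' := by
  refine ⟨congrFun h 0, ?_⟩
  funext k
  exact congrFun h (k + 1)

/-- negative binomial weight in `ℝ≥0∞` -/
noncomputable def nbE (m u : ℕ) : ℝ≥0∞ := ENNReal.ofReal (nb m u)

/-- chain weight -/
noncomputable def CW (e : ℕ → ℕ) (N : ℕ) (u : ℕ → ℕ) : ℝ≥0∞ :=
  ∏ k ∈ Finset.range N, nbE (u k + e k) (u (k + 1))

theorem CW_succ (e : ℕ → ℕ) (N : ℕ) (m : ℕ) (f : ℕ → ℕ) :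
    CW e (N + 1) (cns m f) = nbE (m + e 0) (f 0) * CW (fun k => e (k + 1)) N f := by
  unfold CW
  rw [Finset.prod_range_succ', mul_comm]
  rfl

/-- admissible tails -/
def Ad (b N m : ℕ) (f : ℕ → ℕ) : Prop := (∀ k, f k < b) ∧ ∀ k, N ≤ k → cns m f k = 0

open Classical in
theorem tail_sum (b : ℕ) (hb : 1 ≤ b) (N : ℕ) : ∀ (e : ℕ → ℕ) (m : ℕ),
    ENNReal.ofReal (fr b N e m) ≤ ∑' f, if Ad b N m f then CW e N (cns m f) else 0 := by
  induction N with
  | zero =>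
    intro e m
    unfold fr
    split_ifs with h
    · subst h
      refine le_trans ?_ (ENNReal.le_tsum (fun _ => 0))
      rw [if_pos]
      · simp [CW]
      · refine ⟨fun k => hb, fun k _ => ?_⟩
        cases k <;> rfl
    · simp
  | succ N ih =>
    intro e m
    have hinj : Function.Injective (fun p : ℕ × (ℕ → ℕ) => cns p.1 p.2) := by
      rintro ⟨x, g⟩ ⟨x', g'⟩ h
      obtain ⟨h1, h2⟩ := cns_inj h
      exact Prod.ext h1 h2
    refine le_trans ?_ (ENNReal.tsum_comp_le_tsum_of_injective hinj _)
    rw [ENNReal.tsum_prod']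
    refine le_trans ?_ (ENNReal.sum_le_tsum (Finset.range b))
    unfold fr
    rw [ENNReal.ofReal_sum_of_nonneg (fun u _ => mul_nonneg (nb_nonneg _ _) (fr_nonneg _ _ _ _))]
    apply Finset.sum_le_sum
    intro x hx
    rw [ENNReal.ofReal_mul (nb_nonneg _ _)]
    refine le_trans (mul_le_mul_right (ih (fun k => e (k + 1)) x) _) ?_
    rw [← ENNReal.tsum_mul_left]
    apply ENNReal.tsum_le_tsum
    intro g
    by_cases hg : Ad b N x g
    · rw [if_pos hg, if_pos, CW_succ]
      · rfl
      · refine ⟨fun k => ?_, fun k hk => ?_⟩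
        · cases k with
          | zero => simpa [cns] using hx
          | succ k => exact hg.1 k
        · cases k with
          | zero => omega
          | succ k => exact hg.2 k (by omega)
    · rw [if_neg hg]; simp

/-- down departures -/
def aa (y : ℤ) (u v : ℕ → ℕ) : ℤ → ℕ := fun z =>
  if y < z then u (z - y - 1).toNat else v (y - z).toNat

/-- up departures -/
def bb (y s : ℤ) (u v : ℕ → ℕ) : ℤ → ℕ := fun z =>
  if y ≤ z then u (z - y).toNat else v (y - z - 1).toNat + (if s ≤ z then 1 else 0)

theorem edge_ab (y s : ℤ) (u v : ℕ → ℕ) (hs : s ≤ y) : Edge y s (aa y u v) (bb y s u v) := by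
  intro z
  unfold aa bb
  by_cases h : y ≤ z
  · rw [if_pos (show y < z + 1 by omega), if_pos h, show z + 1 - y - 1 = z - y by ring,
      if_neg (by omega), if_neg (by omega)]
  · rw [if_neg (show ¬ y < z + 1 by omega), if_neg h, show y - (z + 1) = y - z - 1 by ring,
      if_neg (show ¬ (y ≤ z ∧ z < s) by omega)]
    split_ifs <;> omega

theorem ab_inj (y : ℤ) (u v u' v' : ℕ → ℕ) (h : aa y u v = aa y u' v') : u = u' ∧ v = v' := by
  constructor
  · funext k
    have := congrFun h (y + k + 1)
    unfold aa at this
    rw [if_pos (by omega), if_pos (by omega), show y + k + 1 - y - 1 = (k : ℤ) by ring] at this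
    simpa using this
  · funext k
    have := congrFun h (y - k)
    unfold aa at this
    rw [if_neg (by omega), if_neg (by omega), show y - (y - k) = (k : ℤ) by ring] at this
    simpa using this

theorem prod_Icc_sym (y : ℤ) (F : ℤ → ℝ≥0∞) (n : ℕ) :
    ∏ z ∈ Finset.Icc (y - n) (y + n), F z =
      F y * (∏ k ∈ Finset.range n, F (y + k + 1)) * ∏ k ∈ Finset.range n, F (y - k - 1) := by
  induction n with
  | zero => simp
  | succ n ih =>
    rw [Finset.prod_range_succ, Finset.prod_range_succ]
    have : Finset.Icc (y - (n + 1 : ℕ)) (y + (n + 1 : ℕ)) =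
        insert (y + n + 1) (insert (y - n - 1) (Finset.Icc (y - n) (y + n))) := by
      ext z; simp only [Finset.mem_Icc, Finset.mem_insert]; push_cast; omega
    rw [this, Finset.prod_insert, Finset.prod_insert, ih]
    · ring
    · simp only [Finset.mem_Icc]; omega
    · simp only [Finset.mem_Icc, Finset.mem_insert]; omega

theorem half_pow_E (n : ℕ) : (2⁻¹ : ℝ≥0∞) ^ n = ENNReal.ofReal ((1 / 2) ^ n) := by
  rw [ENNReal.ofReal_pow (by norm_num), one_div, ENNReal.ofReal_inv_of_pos (by norm_num)]
  simp

theorem gg_gt (y z : ℤ) (A B : ℕ) (h : y < z) : gg y z A B = nbE A B := by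
  unfold gg nbE nb cf
  rw [if_pos h, ENNReal.ofReal_mul (by positivity), half_pow_E, ENNReal.ofReal_natCast, mul_comm]

theorem gg_lt (y z : ℤ) (A B : ℕ) (h : z < y) : gg y z A B = nbE B A := by
  unfold gg nbE nb cf
  rw [if_neg (by omega), if_pos h, ENNReal.ofReal_mul (by positivity), half_pow_E,
    ENNReal.ofReal_natCast, mul_comm, add_comm A B]

theorem gg_eq (y : ℤ) (A B : ℕ) : gg y y A B = ENNReal.ofReal (bw (A + B) A) := by
  unfold gg bw cf
  rw [if_neg (by omega), if_neg (by omega), ENNReal.ofReal_mul (by positivity), half_pow_E,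
    ENNReal.ofReal_natCast, mul_comm]

theorem T_uv (s : ℤ) (i N : ℕ) (u v : ℕ → ℕ) (hi : i ≤ N) (hu : ∀ k, N ≤ k → u k = 0)
    (hv : ∀ k, N ≤ k → v k = 0) :
    T (s + i) s (aa (s + i) u v) (bb (s + i) s u v) =
      ENNReal.ofReal (bw (v 0 + u 0) (v 0)) * CW (fun _ => 0) N u * CW (ej i) N v := by
  rw [T_prod (s + i) (Finset.Icc (s + i - N) (s + i + N)) s _ _ (edge_ab _ _ _ _ (by omega)),
    prod_Icc_sym, ← gg_eq (s + i)]
  · unfold CW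
    congr 1
    · congr 1
      · simp [aa, bb]
      · apply Finset.prod_congr rfl
        intro k _
        rw [gg_gt _ _ _ _ (by omega)]
        unfold aa bb
        rw [if_pos (by omega), if_pos (by omega), show s + i + k + 1 - (s + i) - 1 = (k : ℤ) by ring,
          show s + i + k + 1 - (s + i) = ((k + 1 : ℕ) : ℤ) by push_cast; ring]
        simp only [Int.toNat_natCast, add_zero]
    · apply Finset.prod_congr rfl
      intro k _
      rw [gg_lt _ _ _ _ (by omega)]
      unfold aa bb ej
      rw [if_neg (show ¬ (s + i ≤ s + i - k - 1) by omega), if_neg (show ¬ (s + i < s + i - k - 1) by omega),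
        show s + i - (s + i - k - 1) - 1 = (k : ℤ) by ring,
        show s + i - (s + i - k - 1) = ((k + 1 : ℕ) : ℤ) by push_cast; ring]
      simp only [Int.toNat_natCast]
      congr 2
      have : s ≤ s + i - k - 1 ↔ k < i := by omega
      simp [this]
  · intro z hz
    simp only [Finset.mem_Icc, not_and_or, not_le] at hz
    unfold aa bb
    rcases hz with h | h
    · rw [if_neg (by omega), if_neg (by omega), if_neg (by omega), hv _ (by omega), hv _ (by omega)]
      simp
    · rw [if_pos (by omega), if_pos (by omega), hu _ (by omega), hu _ (by omega)]
      simp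

end Fav3


end FavPart5

section FavPart6

open scoped ENNReal

namespace Fav3

theorem FG_uv (l0 : ℤ → ℕ) (s : ℤ) (M i h b : ℕ) (u v : ℕ → ℕ) (hi : 2 ≤ i)
    (hM : ∀ z, l0 z ≤ M) (hl : ∀ z, s + i - 2 ≤ z → l0 z = 0) (hb : 2 * b + M ≤ h)
    (h1 : u 0 + u 1 = h) (h2 : v 0 + 1 + u 0 = h) (h3 : v 0 + v 1 + 1 = h)
    (h4 : u 1 + u 2 < h) (h5 : v 1 + v 2 + 1 < h) (hu : ∀ k, 2 ≤ k → u k < b)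
    (hv : ∀ k, 2 ≤ k → v k < b) :
    FG l0 h (s + i) (aa (s + i) u v) (bb (s + i) s u v) := by
  -- right side
  have hR : ∀ k : ℕ, bb (s + i) s u v (s + i + k + 1 - 1) + aa (s + i) u v (s + i + k + 1 + 1) =
      u k + u (k + 1) := by
    intro k
    unfold aa bb
    rw [if_pos (by omega), if_pos (by omega), show s + i + k + 1 - 1 - (s + i) = (k : ℤ) by ring,
      show s + i + k + 1 + 1 - (s + i) - 1 = ((k + 1 : ℕ) : ℤ) by push_cast; ring]
    simp
  have hL : ∀ k : ℕ, bb (s + i) s u v (s + i - k - 1 - 1) + aa (s + i) u v (s + i - k - 1 + 1) =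
      v (k + 1) + (if s ≤ s + i - k - 2 then 1 else 0) + v k := by
    intro k
    unfold aa bb
    rw [if_neg (show ¬ (s + i ≤ s + i - k - 1 - 1) by omega),
      if_neg (show ¬ (s + i < s + i - k - 1 + 1) by omega),
      show s + i - (s + i - k - 1 - 1) - 1 = ((k + 1 : ℕ) : ℤ) by push_cast; ring,
      show s + i - (s + i - k - 1 + 1) = (k : ℤ) by ring, show s + i - k - 1 - 1 = s + i - k - 2 by ring]
    simp only [Int.toNat_natCast]
  have hC : bb (s + i) s u v (s + i - 1) + aa (s + i) u v (s + i + 1) = v 0 + 1 + u 0 := by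
    unfold aa bb
    rw [if_neg (show ¬ (s + i ≤ s + i - 1) by omega), if_pos (show s ≤ s + i - 1 by omega),
      if_pos (show s + i < s + i + 1 by omega)]
    simp
  intro z
  rcases lt_trichotomy z (s + i) with hz | hz | hz
  · obtain ⟨k, rfl⟩ : ∃ k : ℕ, z = s + i - k - 1 := ⟨(s + i - z - 1).toNat, by omega⟩
    rw [hL k]
    have hMz := hM (s + i - k - 1)
    match k with
    | 0 =>
      rw [if_pos (by push_cast; omega), hl _ (by push_cast; omega), if_pos (by push_cast; omega)]
      simp only [zero_add]; omega
    | 1 =>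
      rw [if_neg (by push_cast; omega), hl _ (by push_cast; omega)]
      norm_num
      split_ifs <;> omega
    | k + 2 =>
      rw [if_neg (by push_cast; omega)]
      have := hv (k + 2) (by omega)
      have := hv (k + 2 + 1) (by omega)
      split_ifs <;> omega
  · subst hz
    rw [if_pos (by omega), hC, hl _ (by omega)]
    omega
  · obtain ⟨k, rfl⟩ : ∃ k : ℕ, z = s + i + k + 1 := ⟨(z - (s + i) - 1).toNat, by omega⟩
    rw [hR k, hl _ (by omega)]
    match k with
    | 0 =>
      rw [if_pos (by push_cast; omega)]
      simp only [zero_add]; omega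
    | 1 =>
      rw [if_neg (by push_cast; omega)]
      norm_num
      omega
    | k + 2 =>
      rw [if_neg (by push_cast; omega)]
      have := hu (k + 2) (by omega)
      have := hu (k + 2 + 1) (by omega)
      omega

theorem ej_shift (j : ℕ) : (fun k => ej (j + 2) (k + 1 + 1)) = ej j := by
  funext k; simp [ej]

/-- the lower-bound constant per endpoint -/
noncomputable def cK : ℝ := Real.exp (-8) ^ 2 / (120 * 240 ^ 4)

theorem cK_pos : 0 < cK := by unfold cK; positivity

/-- arithmetic side conditions -/
theorem weights_lower (h q u0 u2 v2 : ℕ) (hq : 1 ≤ q) (hq1 : 400 * q ^ 2 ≤ h) (hq2 : h ≤ 1600 * q ^ 2)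
    (hu0 : h / 2 - q ≤ u0 ∧ u0 ≤ h / 2 + q) (hu2 : h / 2 - 4 * q ≤ u2 ∧ u2 ≤ h / 2 - 3 * q)
    (hv2 : h / 2 - 4 * q ≤ v2 ∧ v2 ≤ h / 2 - 3 * q) :
    1 / (120 * (q : ℝ)) ≤ bw (h - 1 - u0 + u0) (h - 1 - u0) ∧
    1 / (240 * (q : ℝ)) ≤ nb u0 (h - u0) ∧ 1 / (240 * (q : ℝ)) ≤ nb (h - u0) u2 ∧
    1 / (240 * (q : ℝ)) ≤ nb (h - 1 - u0 + 1) u0 ∧ 1 / (240 * (q : ℝ)) ≤ nb (u0 + 1) v2 := by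
  have hqq : q ≤ q ^ 2 := by nlinarith
  have key : ∀ m u, 1 ≤ m → 200 * q ^ 2 ≤ m + u - 1 → m + u - 1 ≤ 1600 * q ^ 2 →
      m + u - 1 ≤ 2 * u + 8 * q → 2 * u ≤ m + u - 1 + 8 * q → 1 / (240 * (q : ℝ)) ≤ nb m u := by
    intro m u hm a1 a2 a3 a4
    rw [nb_bw m u hm]
    have := bw_local (m + u - 1) u q hq a1 a2 a3 a4
    have e : 1 / (240 * (q : ℝ)) = 1 / 2 * (1 / (120 * q)) := by
      field_simp; norm_num
    rw [e]
    gcongr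
  refine ⟨bw_local _ _ q hq ?_ ?_ ?_ ?_, key _ _ ?_ ?_ ?_ ?_ ?_, key _ _ ?_ ?_ ?_ ?_ ?_,
    key _ _ ?_ ?_ ?_ ?_ ?_, key _ _ ?_ ?_ ?_ ?_ ?_⟩ <;> omega

set_option maxHeartbeats 2000000 in
open Classical in
theorem lower_one (l0 : ℤ → ℕ) (s : ℤ) (M j h q : ℕ) (hq : 1 ≤ q) (hqM : M + 1 ≤ 2 * q)
    (hq1 : 400 * q ^ 2 ≤ h) (hq2 : h ≤ 1600 * q ^ 2)
    (hM : ∀ z, l0 z ≤ M) (hl : ∀ z, s + (j + 2 : ℕ) - 2 ≤ z → l0 z = 0) (hj : 8 * j ≤ h) :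
    ENNReal.ofReal (cK / (h : ℝ) ^ 2) ≤
      ∑' p : (ℤ → ℕ) × (ℤ → ℕ), if FG l0 h (s + (j + 2 : ℕ)) p.1 p.2 then
        T (s + (j + 2 : ℕ)) s p.1 p.2 else 0 := by
  have hqq : q ≤ q ^ 2 := by nlinarith
  set b := h / 2 - q with hb
  set N := 2 * b ^ 2 with hN
  set y : ℤ := s + (j + 2 : ℕ) with hy
  let U : (ℕ × ℕ × ℕ) × (ℕ → ℕ) × (ℕ → ℕ) → ℕ → ℕ := fun p =>
    cns p.1.1 (cns (h - p.1.1) (cns p.1.2.1 p.2.1))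
  let V : (ℕ × ℕ × ℕ) × (ℕ → ℕ) × (ℕ → ℕ) → ℕ → ℕ := fun p =>
    cns (h - 1 - p.1.1) (cns p.1.1 (cns p.1.2.2 p.2.2))
  let W : Finset (ℕ × ℕ × ℕ) := Finset.Icc (h / 2 - q) (h / 2 + q) ×ˢ
    (Finset.Icc (h / 2 - 4 * q) (h / 2 - 3 * q) ×ˢ Finset.Icc (h / 2 - 4 * q) (h / 2 - 3 * q))
  have hW : ∀ t, t ∈ W ↔ (h / 2 - q ≤ t.1 ∧ t.1 ≤ h / 2 + q) ∧
      (h / 2 - 4 * q ≤ t.2.1 ∧ t.2.1 ≤ h / 2 - 3 * q) ∧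
      (h / 2 - 4 * q ≤ t.2.2 ∧ t.2.2 ≤ h / 2 - 3 * q) := by
    intro t; simp [W, Finset.mem_product]
  let P : (ℕ × ℕ × ℕ) × (ℕ → ℕ) × (ℕ → ℕ) → Prop := fun p =>
    p.1 ∈ W ∧ Ad b (N + j) p.1.2.1 p.2.1 ∧ Ad b (N + j) p.1.2.2 p.2.2
  have hinj := tsum_inj_le P (fun p : (ℤ → ℕ) × (ℤ → ℕ) => FG l0 h y p.1 p.2)
    (fun x => (aa y (U x) (V x), bb y s (U x) (V x))) (fun p => T y s p.1 p.2)
    (by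
      rintro ⟨⟨u0, u2, v2⟩, f, g⟩ ⟨hw, hf, hg⟩
      obtain ⟨w1, w2, w3⟩ := (hW _).mp hw
      simp only at w1 w2 w3 hf hg
      apply FG_uv l0 s M (j + 2) h b _ _ (by omega) hM hl
      · omega
      · show u0 + (h - u0) = h
        omega
      · show h - 1 - u0 + 1 + u0 = h
        omega
      · show h - 1 - u0 + u0 + 1 = h
        omega
      · show h - u0 + u2 < h
        omega
      · show u0 + v2 + 1 < h
        omega
      · intro k hk
        match k, hk with
        | 2, _ => show u2 < b; omega
        | k + 3, _ => exact hf.1 k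
      · intro k hk
        match k, hk with
        | 2, _ => show v2 < b; omega
        | k + 3, _ => exact hg.1 k)
    (by
      rintro ⟨⟨u0, u2, v2⟩, f, g⟩ ⟨⟨u0', u2', v2'⟩, f', g'⟩ _ _ hE
      have h1 := congrArg Prod.fst hE
      obtain ⟨h2, h3⟩ := ab_inj _ _ _ _ _ h1
      obtain ⟨h4, h5⟩ := cns_inj h2
      obtain ⟨_, h7⟩ := cns_inj h5
      obtain ⟨h8, h9⟩ := cns_inj h7
      obtain ⟨_, h11⟩ := cns_inj h3
      obtain ⟨_, h13⟩ := cns_inj h11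
      obtain ⟨h14, h15⟩ := cns_inj h13
      simp only at h4 h8 h9 h14 h15
      subst h4 h8 h9 h14 h15
      rfl)
  refine le_trans ?_ (le_trans hinj (le_of_eq (by congr!)))
  have hq0 : (0 : ℝ) < q := by exact_mod_cast hq
  have hh0 : (0 : ℝ) < h := by
    have : (400 : ℝ) * q ^ 2 ≤ h := by exact_mod_cast hq1
    nlinarith
  set K : ℝ := (1 / (120 * (q : ℝ))) * ((1 / (240 * (q : ℝ))) * (1 / (240 * (q : ℝ)))) *
    ((1 / (240 * (q : ℝ))) * (1 / (240 * (q : ℝ)))) with hK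
  have hK0 : 0 ≤ K := by positivity
  have hT : ∀ x, P x → ENNReal.ofReal K * (CW (fun _ => 0) (N + j) (cns x.1.2.1 x.2.1) *
      CW (ej j) (N + j) (cns x.1.2.2 x.2.2)) ≤ T y s (aa y (U x) (V x)) (bb y s (U x) (V x)) := by
    rintro ⟨⟨u0, u2, v2⟩, f, g⟩ ⟨hw, hf, hg⟩
    obtain ⟨w1, w2, w3⟩ := (hW _).mp hw
    simp only at w1 w2 w3 hf hg
    obtain ⟨a1, a2, a3, a4, a5⟩ := weights_lower h q u0 u2 v2 hq hq1 hq2 w1 w2 w3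
    rw [hy, T_uv s (j + 2) (N + j + 1 + 1) _ _ (by omega)]
    · simp only [U, V]
      rw [CW_succ, CW_succ, CW_succ, CW_succ, ej_shift]
      have e1 : ej (j + 2) 0 = 1 := by simp [ej]
      have e2 : ej (j + 2) (0 + 1) = 1 := by simp [ej]
      rw [e1, e2]
      simp only [cns, add_zero]
      rw [hK, ENNReal.ofReal_mul (by positivity), ENNReal.ofReal_mul (by positivity),
        ENNReal.ofReal_mul (by positivity)]
      have b1 := ENNReal.ofReal_le_ofReal a1
      have b2 := ENNReal.ofReal_le_ofReal a2
      have b3 := ENNReal.ofReal_le_ofReal a3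
      have b4 := ENNReal.ofReal_le_ofReal a4
      have b5 := ENNReal.ofReal_le_ofReal a5
      calc _ ≤ ENNReal.ofReal (bw (h - 1 - u0 + u0) (h - 1 - u0)) * (nbE u0 (h - u0) * nbE (h - u0) u2) *
            (nbE (h - 1 - u0 + 1) u0 * nbE (u0 + 1) v2) * (CW (fun _ => 0) (N + j) (cns u2 f) *
            CW (ej j) (N + j) (cns v2 g)) := by
              unfold nbE; gcongr
        _ = _ := by ring
    · intro k hk
      match k, hk with
      | 0, hk => omega
      | 1, hk => omega
      | k + 2, hk => exact hf.2 k (by omega)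
    · intro k hk
      match k, hk with
      | 0, hk => omega
      | 1, hk => omega
      | k + 2, hk => exact hg.2 k (by omega)
  have hPi : ∀ t f g, t ∈ W → Ad b (N + j) t.2.1 f → Ad b (N + j) t.2.2 g → P (t, f, g) :=
    fun t f g h1 h2 h3 => ⟨h1, h2, h3⟩
  have hT' : ∀ t f g, P (t, f, g) → ENNReal.ofReal K * (CW (fun _ => 0) (N + j) (cns t.2.1 f) *
      CW (ej j) (N + j) (cns t.2.2 g)) ≤
      T y s (aa y (U (t, f, g)) (V (t, f, g))) (bb y s (U (t, f, g)) (V (t, f, g))) :=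
    fun t f g => hT (t, f, g)
  clear hT hinj
  clear_value P U V K
  set R : ℝ := Real.exp (-8) * (q / h) with hR
  have hR0 : 0 ≤ R := by positivity
  have hb1 : 1 ≤ b := by omega
  calc ENNReal.ofReal (cK / (h : ℝ) ^ 2) ≤ ENNReal.ofReal ((W.card : ℝ) * (K * (R * R))) := by
        apply ENNReal.ofReal_le_ofReal
        have hWc : q ^ 3 ≤ W.card := by
          simp only [W, Finset.card_product, Nat.card_Icc]
          have c1 : q ≤ h / 2 + q + 1 - (h / 2 - q) := by omega
          have c2 : q ≤ h / 2 - 3 * q + 1 - (h / 2 - 4 * q) := by omega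
          calc q ^ 3 = q * (q * q) := by ring
            _ ≤ _ := by gcongr
        have hWc' : (q : ℝ) ^ 3 ≤ W.card := by exact_mod_cast hWc
        calc cK / (h : ℝ) ^ 2 = q ^ 3 * (K * (R * R)) := by
              rw [hK, hR]; unfold cK; field_simp
          _ ≤ _ := by gcongr
    _ = ∑ t ∈ W, ENNReal.ofReal K * (ENNReal.ofReal R * ENNReal.ofReal R) := by
        rw [Finset.sum_const, nsmul_eq_mul, ENNReal.ofReal_mul (by positivity),
          ENNReal.ofReal_mul hK0, ENNReal.ofReal_mul hR0, ENNReal.ofReal_natCast]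
    _ ≤ ∑ t ∈ W, ENNReal.ofReal K * ((∑' f, if Ad b (N + j) t.2.1 f then
          CW (fun _ => 0) (N + j) (cns t.2.1 f) else 0) *
          (∑' g, if Ad b (N + j) t.2.2 g then CW (ej j) (N + j) (cns t.2.2 g) else 0)) := by
        apply Finset.sum_le_sum
        intro t ht
        obtain ⟨w1, w2, w3⟩ := (hW _).mp ht
        have f1 := (fr_final h b N j q t.2.1 (by omega) (by omega) (by omega) (by omega) (by omega) hj
          (by omega) (by omega)).2
        have f2 := (fr_final h b N j q t.2.2 (by omega) (by omega) (by omega) (by omega) (by omega) hj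
          (by omega) (by omega)).1
        gcongr
        · exact le_trans (ENNReal.ofReal_le_ofReal f1) (tail_sum b hb1 _ _ _)
        · exact le_trans (ENNReal.ofReal_le_ofReal f2) (tail_sum b hb1 _ _ _)
    _ ≤ ∑ t ∈ W, ∑' p : (ℕ → ℕ) × (ℕ → ℕ), if P (t, p) then
          T y s (aa y (U (t, p)) (V (t, p))) (bb y s (U (t, p)) (V (t, p))) else 0 := by
        apply Finset.sum_le_sum
        intro t ht
        rw [ENNReal.tsum_prod', ← ENNReal.tsum_mul_right, ← ENNReal.tsum_mul_left]
        apply ENNReal.tsum_le_tsum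
        intro f
        rw [← ENNReal.tsum_mul_left, ← ENNReal.tsum_mul_left]
        apply ENNReal.tsum_le_tsum
        intro g
        by_cases hf : Ad b (N + j) t.2.1 f
        · by_cases hg : Ad b (N + j) t.2.2 g
          · have hP : P (t, f, g) := hPi t f g ht hf hg
            rw [if_pos hf, if_pos hg, if_pos hP]
            exact hT' t f g hP
          · rw [if_neg hg]; simp
        · rw [if_neg hf]; simp
    _ ≤ _ := by
        rw [ENNReal.tsum_prod']
        exact ENNReal.sum_le_tsum W

theorem exists_q (h : ℕ) (hh : 400 ≤ h) : ∃ q, 1 ≤ q ∧ 400 * q ^ 2 ≤ h ∧ h ≤ 1600 * q ^ 2 := by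
  have h1 := Nat.sqrt_le' h
  have h2 := Nat.lt_succ_sqrt' h
  have h3 : 20 ≤ Nat.sqrt h := by
    rw [Nat.le_sqrt']; omega
  set r := Nat.sqrt h
  refine ⟨r / 20, by omega, ?_, ?_⟩
  · have : 20 * (r / 20) ≤ r := by omega
    calc 400 * (r / 20) ^ 2 = (20 * (r / 20)) ^ 2 := by ring
      _ ≤ r ^ 2 := Nat.pow_le_pow_left this 2
      _ ≤ h := h1
  · have : r + 1 ≤ 40 * (r / 20) := by omega
    rw [Nat.succ_eq_add_one] at h2
    calc h ≤ (r + 1) ^ 2 := h2.le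
      _ ≤ (40 * (r / 20)) ^ 2 := Nat.pow_le_pow_left this 2
      _ = _ := by ring

theorem lower (l0 : ℤ → ℕ) (s : ℤ) (M : ℕ) (hM : ∀ z, l0 z ≤ M) (hl : ∀ z, (M : ℤ) < z → l0 z = 0) :
    ∃ h0 : ℕ, ∀ h, h0 ≤ h → ENNReal.ofReal (cK / 16 / h) ≤ Sm (Gam l0 s h) := by
  classical
  set j0 : ℕ := M + s.natAbs + 1 with hj0
  refine ⟨16 * j0 + 16 + 1600 * (M + 1) ^ 2, fun h hh => ?_⟩
  have hM1 : 1 ≤ (M + 1) ^ 2 := Nat.one_le_pow _ _ (by omega)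
  obtain ⟨q, hq, hq1, hq2⟩ := exists_q h (by omega)
  have hqM : M + 1 ≤ 2 * q := by
    by_contra hcon
    push Not at hcon
    have : q ^ 2 < (M + 1) ^ 2 := by
      apply Nat.pow_lt_pow_left (by omega) (by norm_num)
    omega
  have hsum : ∀ j ∈ Finset.Ico j0 (h / 8), ENNReal.ofReal (cK / (h : ℝ) ^ 2) ≤
      ∑' p : (ℤ → ℕ) × (ℤ → ℕ), if FG l0 h (s + (j + 2 : ℕ)) p.1 p.2 then
        T (s + (j + 2 : ℕ)) s p.1 p.2 else 0 := by
    intro j hj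
    rw [Finset.mem_Ico] at hj
    apply lower_one l0 s M j h q hq hqM hq1 hq2 hM _ (by omega)
    intro z hz
    apply hl
    push_cast at hz
    omega
  rw [Sm_group s _ _ (Gam_iff l0 s h), ENNReal.tsum_prod']
  have hinj : Function.Injective (fun j : ℕ => s + (j + 2 : ℕ)) := by
    intro j j' hjj
    simp at hjj
    exact hjj
  refine le_trans ?_ (ENNReal.tsum_comp_le_tsum_of_injective hinj _)
  refine le_trans ?_ (ENNReal.sum_le_tsum (Finset.Ico j0 (h / 8)))
  refine le_trans ?_ (Finset.sum_le_sum hsum)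
  rw [Finset.sum_const, nsmul_eq_mul, Nat.card_Ico, ← ENNReal.ofReal_natCast,
    ← ENNReal.ofReal_mul (by positivity)]
  apply ENNReal.ofReal_le_ofReal
  have hh0 : (0 : ℝ) < h := by
    have : 0 < h := by omega
    exact_mod_cast this
  have hc : (h : ℝ) ≤ 16 * ((h / 8 - j0 : ℕ) : ℝ) := by
    have : h ≤ 16 * (h / 8 - j0) := by omega
    exact_mod_cast this
  have := cK_pos
  rw [div_div, div_le_iff₀ (by positivity)]
  calc cK = cK / h ^ 2 * (h * h) := by field_simp
    _ ≤ cK / h ^ 2 * (16 * ((h / 8 - j0 : ℕ) : ℝ) * h) := by gcongr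
    _ = _ := by ring

end Fav3


end FavPart6

section FavPart7

open scoped ENNReal

namespace Fav3

/-- shifted occupation profile -/
def sh (l0 : ℤ → ℕ) (s : ℤ) (w : List Bool) : ℤ → ℕ := fun z => l0 z + vis s w z

theorem Gam_append (l0 : ℤ → ℕ) (s : ℤ) (h : ℕ) (w v : List Bool) :
    Gam l0 s h (w ++ v) ↔ Gam (sh l0 s w) (pos s w) h v := by
  unfold Gam sh
  simp only [pos_append, vis_append, add_assoc]

theorem Gam_le (l0 : ℤ → ℕ) (s : ℤ) (h : ℕ) (w : List Bool) (hw : Gam l0 s h w) (z : ℤ) :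
    sh l0 s w z ≤ h := by
  have := hw z
  unfold sh
  split_ifs at this <;> omega

theorem Gam_mid (l0 : ℤ → ℕ) (s : ℤ) (h : ℕ) (w : List Bool) (hw : Gam l0 s h w) (z : ℤ)
    (hz : pos s w - 1 ≤ z ∧ z ≤ pos s w + 1) : sh l0 s w z = h := by
  have := hw z
  rw [if_pos hz] at this
  exact this

theorem Gam_same (l0 : ℤ → ℕ) (s : ℤ) (h : ℕ) (w v : List Bool) (hw : Gam l0 s h w)
    (hv : Gam (sh l0 s w) (pos s w) h v) : v = [] := by
  have key : ∀ z, pos s w - 1 ≤ z ∧ z ≤ pos s w + 1 →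
      pos (pos s w) v - 1 ≤ z ∧ z ≤ pos (pos s w) v + 1 := by
    intro z hz
    by_contra hcon
    have h1 := hv z
    rw [if_neg hcon, Gam_mid l0 s h w hw z hz] at h1
    omega
  have k1 := key (pos s w - 1) (by omega)
  have k2 := key (pos s w + 1) (by omega)
  have hp : pos (pos s w) v = pos s w := by omega
  by_contra hne
  have h2 := vis_pos_of_ne_nil (pos s w) v hne
  have h3 := hv (pos s w)
  rw [if_pos (by omega), Gam_mid l0 s h w hw _ (by omega)] at h3
  rw [hp] at h2
  omega

theorem Gam_high (l0 : ℤ → ℕ) (s : ℤ) (h h1 : ℕ) (w v : List Bool) (hw : Gam l0 s h1 w)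
    (hv : Gam (sh l0 s w) (pos s w) h v) : h1 ≤ h := by
  have h2 := Gam_le _ _ _ _ hv (pos s w)
  have h3 := Gam_mid l0 s h1 w hw (pos s w) (by omega)
  unfold sh at h2 h3
  omega

/-- words that are in some `Gam` of the window -/
def GW (l0 : ℤ → ℕ) (s : ℤ) (A B : ℕ) (w : List Bool) : Prop :=
  ∃ i ∈ Finset.Ico A B, Gam l0 s (i + 1) w

/-- minimal words -/
def Fst (l0 : ℤ → ℕ) (s : ℤ) (A B : ℕ) (w : List Bool) : Prop :=
  GW l0 s A B w ∧ ∀ w1 w2, w = w1 ++ w2 → GW l0 s A B w1 → w2 = []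

theorem exists_first (l0 : ℤ → ℕ) (s : ℤ) (A B : ℕ) : ∀ (n : ℕ) (w : List Bool), w.length = n →
    GW l0 s A B w → ∃ w1 w2, w = w1 ++ w2 ∧ Fst l0 s A B w1 := by
  intro n
  induction n using Nat.strong_induction_on with
  | _ n ih =>
    intro w hn hw
    by_cases hF : Fst l0 s A B w
    · exact ⟨w, [], by simp, hF⟩
    · unfold Fst at hF
      push Not at hF
      obtain ⟨w1, w2, h1, h2, h3⟩ := hF hw
      have hl : w1.length < n := by
        have := List.length_pos_iff.mpr h3
        rw [h1, List.length_append] at hn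
        omega
      obtain ⟨v1, v2, h4, h5⟩ := ih _ hl w1 rfl h2
      exact ⟨v1, v2 ++ w2, by rw [h1, h4, List.append_assoc], h5⟩

theorem Sm_single : Sm (fun w => w = []) = 1 := by
  unfold Sm
  rw [tsum_eq_single []]
  · simp [wt]
  · intro w hw; simp [hw]

/-- harmonic numbers -/
noncomputable def hR (n : ℕ) : ℝ := ∑ i ∈ Finset.range n, 1 / ((i : ℝ) + 1)

theorem hR_nonneg (n : ℕ) : 0 ≤ hR n := Finset.sum_nonneg fun i _ => by positivity

theorem inner_sum (l0 : ℤ → ℕ) (s : ℤ) (A B h1 : ℕ) (w : List Bool) (hw : Gam l0 s h1 w) :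
    ∑ i ∈ Finset.Ico A B, Sm (Gam (sh l0 s w) (pos s w) (i + 1)) ≤
      ENNReal.ofReal (1 + 640 * hR B) := by
  have hterm : ∀ i ∈ Finset.Ico A B, Sm (Gam (sh l0 s w) (pos s w) (i + 1)) ≤
      (if i + 1 = h1 then 1 else 0) +
        (if h1 ≤ i then ENNReal.ofReal (640 * (1 / ((i - h1 : ℕ) + 1 : ℝ))) else 0) := by
    intro i _
    rcases lt_trichotomy (i + 1) h1 with h | h | h
    · have : Sm (Gam (sh l0 s w) (pos s w) (i + 1)) = 0 := by
        unfold Sm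
        rw [ENNReal.tsum_eq_zero]
        intro v
        rw [if_neg]
        intro hv
        have := Gam_high _ _ _ _ _ _ hw hv
        omega
      rw [this]; exact zero_le
    · rw [if_pos h]
      refine le_trans ?_ le_self_add
      rw [← Sm_single]
      apply Sm_mono
      intro v hv
      rw [h] at hv
      exact Gam_same _ _ _ _ _ hw hv
    · rw [if_neg (by omega), if_pos (by omega), zero_add]
      have := upper (sh l0 s w) (pos s w) (i + 1) (i - h1 + 1) (fun z => by
        have := Gam_le _ _ _ _ hw z
        omega)
      rw [mul_one_div, ENNReal.ofReal_div_of_pos (by positivity)]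
      rw [ENNReal.le_div_iff_mul_le]
      · rw [mul_comm]
        refine le_trans (le_of_eq ?_) (le_trans this (le_of_eq ?_))
        · congr 1
          rw [← ENNReal.ofReal_natCast]; push_cast; rfl
        · norm_num
      · left; simp; positivity
      · left; simp
  refine le_trans (Finset.sum_le_sum hterm) ?_
  rw [Finset.sum_add_distrib, ENNReal.ofReal_add (by norm_num) (mul_nonneg (by norm_num) (hR_nonneg B))]
  apply add_le_add
  · have : ∑ i ∈ Finset.Ico A B, (if i + 1 = h1 then (1 : ℝ≥0∞) else 0) ≤
        ∑ i ∈ Finset.Ico A B, (if i = h1 - 1 then (1 : ℝ≥0∞) else 0) := by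
      apply Finset.sum_le_sum
      intro i _
      split_ifs <;> first | omega | simp
    refine le_trans this ?_
    rw [Finset.sum_ite_eq']
    split_ifs <;> simp
  · rw [← Finset.sum_filter]
    have hinj : Set.InjOn (fun i => i - h1) (((Finset.Ico A B).filter (fun i => h1 ≤ i) : Finset ℕ) : Set ℕ) := by
      intro i hi j hj hij
      simp at hi hj hij
      omega
    rw [← Finset.sum_image (f := fun r : ℕ => ENNReal.ofReal (640 * (1 / ((r : ℕ) + 1 : ℝ)))) hinj]
    unfold hR
    rw [Finset.mul_sum, ENNReal.ofReal_sum_of_nonneg (fun i _ => by positivity)]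
    apply Finset.sum_le_sum_of_subset
    intro r hr
    simp at hr ⊢
    obtain ⟨i, hi, rfl⟩ := hr
    omega

theorem Sm_le_first (l0 : ℤ → ℕ) (s : ℤ) (A B i : ℕ) (hi : i ∈ Finset.Ico A B) :
    Sm (Gam l0 s (i + 1)) ≤ ∑' w : {w // Fst l0 s A B w},
      wt w.1 * Sm (Gam (sh l0 s w) (pos s w) (i + 1)) := by
  classical
  have h1 : ∀ w, ∃ p : List Bool × List Bool, Gam l0 s (i + 1) w →
      w = p.1 ++ p.2 ∧ Fst l0 s A B p.1 := by
    intro w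
    by_cases hw : Gam l0 s (i + 1) w
    · obtain ⟨w1, w2, h1, h2⟩ := exists_first l0 s A B _ w rfl ⟨i, hi, hw⟩
      exact ⟨(w1, w2), fun _ => ⟨h1, h2⟩⟩
    · exact ⟨([], []), fun h => absurd h hw⟩
  choose g hg using h1
  have key := tsum_inj_le (Gam l0 s (i + 1))
    (fun p : List Bool × List Bool => Fst l0 s A B p.1 ∧ Gam (sh l0 s p.1) (pos s p.1) (i + 1) p.2)
    g (fun p => wt (p.1 ++ p.2)) (by
      intro w hw
      obtain ⟨h1, h2⟩ := hg w hw
      refine ⟨h2, ?_⟩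
      rw [← Gam_append, ← h1]; exact hw) (by
      intro w w' hw hw' he
      rw [(hg w hw).1, (hg w' hw').1, he])
  have e1 : Sm (Gam l0 s (i + 1)) = ∑' w, if Gam l0 s (i + 1) w then wt ((g w).1 ++ (g w).2) else 0 := by
    unfold Sm
    apply tsum_congr
    intro w
    by_cases hw : Gam l0 s (i + 1) w
    · rw [if_pos hw, if_pos hw, ← (hg w hw).1]
    · rw [if_neg hw, if_neg hw]
  rw [e1]
  refine le_trans (le_of_eq (by congr!)) (le_trans key ?_)
  rw [ENNReal.tsum_prod']
  have e2 : ∑' w : {w // Fst l0 s A B w}, wt w.1 * Sm (Gam (sh l0 s w) (pos s w) (i + 1)) =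
      ∑' w, if Fst l0 s A B w then wt w * Sm (Gam (sh l0 s w) (pos s w) (i + 1)) else 0 := by
    rw [show (fun w => if Fst l0 s A B w then wt w * Sm (Gam (sh l0 s w) (pos s w) (i + 1)) else 0) =
      Set.indicator {w | Fst l0 s A B w} (fun w => wt w * Sm (Gam (sh l0 s w) (pos s w) (i + 1))) by
      funext x; simp [Set.indicator]]
    rw [← tsum_subtype]
    rfl
  rw [e2]
  apply ENNReal.tsum_le_tsum
  intro w
  by_cases hw : Fst l0 s A B w
  · rw [if_pos hw]
    unfold Sm
    rw [← ENNReal.tsum_mul_left]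
    apply ENNReal.tsum_le_tsum
    intro v
    by_cases hv : Gam (sh l0 s w) (pos s w) (i + 1) v
    · rw [if_pos ⟨hw, hv⟩, if_pos hv, wt_append]
    · rw [if_neg (fun h => hv h.2)]; exact zero_le
  · rw [if_neg hw]
    apply le_of_eq
    rw [ENNReal.tsum_eq_zero]
    intro v
    rw [if_neg (fun h => hw h.1)]

theorem sum_le_first (l0 : ℤ → ℕ) (s : ℤ) (A B : ℕ) :
    ∑ i ∈ Finset.Ico A B, Sm (Gam l0 s (i + 1)) ≤
      Sm (Fst l0 s A B) * ENNReal.ofReal (1 + 640 * hR B) := by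
  classical
  refine le_trans (Finset.sum_le_sum fun i hi => Sm_le_first l0 s A B i hi) ?_
  rw [← Summable.tsum_finsetSum (fun _ _ => ENNReal.summable)]
  have e2 : Sm (Fst l0 s A B) = ∑' w : {w // Fst l0 s A B w}, wt w.1 := by
    unfold Sm
    rw [show (fun w => if Fst l0 s A B w then wt w else 0) =
      Set.indicator {w | Fst l0 s A B w} (fun w => wt w) by
      funext x; simp [Set.indicator]]
    rw [← tsum_subtype]
    rfl
  rw [e2, ← ENNReal.tsum_mul_right]
  apply ENNReal.tsum_le_tsum
  rintro ⟨w, hw⟩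
  rw [← Finset.mul_sum]
  obtain ⟨⟨i, _, hi⟩, _⟩ := hw
  exact mul_le_mul_right (inner_sum l0 s A B (i + 1) w hi) _

theorem Fst_free (l0 : ℤ → ℕ) (s : ℤ) (A B : ℕ) (w v : List Bool) (h1 : Fst l0 s A B w)
    (h2 : Fst l0 s A B (w ++ v)) : v = [] := h2.2 w v rfl h1.1

/-- universal constant -/
noncomputable def c0 : ℝ := cK / 16 / 1282

theorem c0_pos : 0 < c0 := by unfold c0; have := cK_pos; positivity

theorem first_lower (l0 : ℤ → ℕ) (s : ℤ) (M H0 : ℕ) (hM : ∀ z, l0 z ≤ M)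
    (hl : ∀ z, (M : ℤ) < z → l0 z = 0) :
    ∃ A B, H0 ≤ A ∧ ENNReal.ofReal c0 ≤ Sm (Fst l0 s A B) := by
  obtain ⟨h0, hh0⟩ := lower l0 s M hM hl
  set A := max H0 h0 with hA
  have hlim := Real.tendsto_sum_range_one_div_nat_succ_atTop
  obtain ⟨B, hB1, hB2⟩ := ((hlim.eventually_ge_atTop (2 * hR A + 1)).and
    (Filter.eventually_ge_atTop A)).exists
  have hB1 : 2 * hR A + 1 ≤ hR B := hB1
  refine ⟨A, B, le_max_left _ _, ?_⟩
  have hup := sum_le_first l0 s A B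
  have hk := kraft _ (Fst_free l0 s A B)
  have hne : Sm (Fst l0 s A B) ≠ ⊤ := ne_top_of_le_ne_top ENNReal.one_ne_top hk
  obtain ⟨x, hx0, hx⟩ : ∃ x : ℝ, 0 ≤ x ∧ Sm (Fst l0 s A B) = ENNReal.ofReal x :=
    ⟨_, ENNReal.toReal_nonneg, (ENNReal.ofReal_toReal hne).symm⟩
  rw [hx] at hup ⊢
  have hlow : ENNReal.ofReal (cK / 16 * (hR B - hR A)) ≤ ∑ i ∈ Finset.Ico A B, Sm (Gam l0 s (i + 1)) := by
    have : cK / 16 * (hR B - hR A) = ∑ i ∈ Finset.Ico A B, cK / 16 / ((i + 1 : ℕ) : ℝ) := by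
      unfold hR
      rw [← Finset.sum_Ico_eq_sub _ hB2, Finset.mul_sum]
      apply Finset.sum_congr rfl
      intro i _
      push_cast; ring
    have hc := cK_pos
    rw [this, ENNReal.ofReal_sum_of_nonneg (fun i _ => by positivity)]
    apply Finset.sum_le_sum
    intro i hi
    apply hh0
    have := (Finset.mem_Ico.mp hi).1
    have := le_max_right H0 h0
    omega
  have h3 := le_trans hlow hup
  have hA0 := hR_nonneg A
  have hB0 := hR_nonneg B
  rw [← ENNReal.ofReal_mul hx0, ENNReal.ofReal_le_ofReal_iff (by positivity)] at h3
  apply ENNReal.ofReal_le_ofReal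
  unfold c0
  have hc := cK_pos
  by_contra hcon
  push Not at hcon
  have h4 : x * (1 + 640 * hR B) ≤ x * (641 * hR B) := by
    apply mul_le_mul_of_nonneg_left _ hx0; linarith
  have h5 : cK / 16 * (hR B / 2) ≤ cK / 16 * (hR B - hR A) := by
    apply mul_le_mul_of_nonneg_left _ (by positivity); linarith
  have h6 : x * (641 * hR B) < cK / 16 / 1282 * (641 * hR B) := by
    apply mul_lt_mul_of_pos_right hcon; linarith
  have h7 : cK / 16 / 1282 * (641 * hR B) = cK / 16 * (hR B / 2) := by ring
  linarith

end Fav3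


end FavPart7

section FavPart8

open scoped ENNReal
open MeasureTheory ProbabilityTheory

namespace Fav3

/-- the word read off a sample point -/
def wd {Ω : Type*} (ξ : ℕ → Ω → ℤ) (ω : Ω) (n : ℕ) : List Bool :=
  (List.range n).map fun i => decide (ξ i ω = 1)

theorem wd_length {Ω : Type*} (ξ : ℕ → Ω → ℤ) (ω : Ω) (n : ℕ) : (wd ξ ω n).length = n := by
  simp [wd]

theorem wd_succ {Ω : Type*} (ξ : ℕ → Ω → ℤ) (ω : Ω) (n : ℕ) :
    wd ξ ω (n + 1) = wd ξ ω n ++ [decide (ξ n ω = 1)] := by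
  simp [wd, List.range_succ]

theorem wd_take {Ω : Type*} (ξ : ℕ → Ω → ℤ) (ω : Ω) (m n : ℕ) (h : m ≤ n) :
    (wd ξ ω n).take m = wd ξ ω m := by
  simp [wd, ← List.map_take, List.take_range, h]

/-- cylinder -/
def Ey {Ω : Type*} (ξ : ℕ → Ω → ℤ) (w : List Bool) : Set Ω := {ω | wd ξ ω w.length = w}

theorem Ey_meas {Ω : Type*} [MeasurableSpace Ω] (μ : Measure Ω) [IsProbabilityMeasure μ]
    (ξ : ℕ → Ω → ℤ) (hm : ∀ i, Measurable (ξ i)) (hind : iIndepFun ξ μ)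
    (h1 : ∀ i, μ {ω | ξ i ω = 1} = 1 / 2) (w : List Bool) :
    MeasurableSet (Ey ξ w) ∧ μ (Ey ξ w) = wt w := by
  let st : ℕ → Set ℤ := fun i => if w.getD i true = true then {1} else {1}ᶜ
  have hst : ∀ i, MeasurableSet (st i) := fun i => MeasurableSet.of_discrete
  have e : Ey ξ w = ⋂ i ∈ Finset.range w.length, ξ i ⁻¹' st i := by
    ext ω
    simp only [Ey, Set.mem_setOf_eq, Set.mem_iInter, Finset.mem_range, Set.mem_preimage]
    constructor
    · intro h i hi
      have : (wd ξ ω w.length)[i]'(by rw [wd_length]; exact hi) = w[i] := by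
        congr 1
      simp only [wd, List.getElem_map, List.getElem_range] at this
      simp only [st, List.getD_eq_getElem _ _ hi]
      rw [← this]
      by_cases hx : ξ i ω = 1 <;> simp [hx]
    · intro h
      apply List.ext_getElem (wd_length _ _ _)
      intro i hi hi2
      have := h i hi2
      simp only [st, List.getD_eq_getElem _ _ hi2] at this
      simp only [wd, List.getElem_map, List.getElem_range]
      split_ifs at this with hc
      · rw [hc]; simpa using this
      · simp at hc
        rw [hc]; simpa using this
  rw [e]
  constructor
  · exact Finset.measurableSet_biInter _ fun i _ => hm i (hst i)
  · rw [hind.measure_inter_preimage_eq_mul _ (fun i _ => hst i)]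
    have : ∀ i ∈ Finset.range w.length, μ (ξ i ⁻¹' st i) = 2⁻¹ := by
      intro i _
      have hi : μ (ξ i ⁻¹' {1}) = 2⁻¹ := by
        have := h1 i
        rw [one_div] at this
        exact this
      simp only [st]
      split_ifs
      · exact hi
      · rw [Set.preimage_compl, prob_compl_eq_one_sub (hm i MeasurableSet.of_discrete), hi]
        exact ENNReal.one_sub_inv_two
    rw [Finset.prod_congr rfl this]
    simp [wt]

theorem Ey_disj {Ω : Type*} (ξ : ℕ → Ω → ℤ) (w w' : List Bool) (ω : Ω) (h : ω ∈ Ey ξ w)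
    (h' : ω ∈ Ey ξ w') (hl : w.length ≤ w'.length) : ∃ v, w' = w ++ v := by
  refine ⟨w'.drop w.length, ?_⟩
  have : w'.take w.length = w := by
    have h1 : wd ξ ω w'.length = w' := h'
    have h2 : wd ξ ω w.length = w := h
    conv_lhs => rw [← h1]
    rw [wd_take ξ ω _ _ hl, h2]
  conv_lhs => rw [← List.take_append_drop w.length w', this]

/-- words having a good prefix -/
def Bd (H0 : ℕ) (w : List Bool) : Prop := ∃ m, ∃ h, H0 ≤ h ∧ Gam (fun _ => 0) 0 h (w.take m)

theorem cond_lower {Ω : Type*} [MeasurableSpace Ω] (μ : Measure Ω) [IsProbabilityMeasure μ]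
    (ξ : ℕ → Ω → ℤ) (hm : ∀ i, Measurable (ξ i)) (hind : iIndepFun ξ μ)
    (h1 : ∀ i, μ {ω | ξ i ω = 1} = 1 / 2) (H0 : ℕ) (w0 : List Bool) :
    ENNReal.ofReal c0 * wt w0 ≤ μ (Ey ξ w0 ∩ {ω | ∃ n, Bd H0 (wd ξ ω n)}) := by
  classical
  obtain ⟨A, B, hA, hlow⟩ := first_lower (sh (fun _ => 0) 0 w0) (pos 0 w0) w0.length H0
    (fun z => by simpa [sh] using vis_le_length 0 w0 z)
    (fun z hz => by
      simp only [sh, zero_add]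
      apply vis_far
      rw [sub_zero]
      exact lt_of_lt_of_le hz (le_abs_self z))
  set F := Fst (sh (fun _ => 0) 0 w0) (pos 0 w0) A B with hF
  have hsub : (⋃ w : {w // F w}, Ey ξ (w0 ++ w.1)) ⊆ Ey ξ w0 ∩ {ω | ∃ n, Bd H0 (wd ξ ω n)} := by
    intro ω hω
    rw [Set.mem_iUnion] at hω
    obtain ⟨⟨w, hw⟩, hω⟩ := hω
    have hω' : wd ξ ω (w0 ++ w).length = w0 ++ w := hω
    refine ⟨?_, (w0 ++ w).length, (w0 ++ w).length, ?_⟩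
    · show wd ξ ω w0.length = w0
      rw [← wd_take ξ ω w0.length (w0 ++ w).length (by simp), hω']
      simp
    · obtain ⟨⟨i, hi, hg⟩, _⟩ := hw
      refine ⟨i + 1, ?_, ?_⟩
      · have := (Finset.mem_Ico.mp hi).1
        omega
      · rw [hω', List.take_length, Gam_append]
        exact hg
  refine le_trans ?_ (measure_mono hsub)
  rw [measure_iUnion]
  · have e : ∀ w : {w // F w}, μ (Ey ξ (w0 ++ w.1)) = wt w0 * wt w.1 := by
      intro w
      rw [(Ey_meas μ ξ hm hind h1 _).2, wt_append]
    simp only [e]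
    rw [ENNReal.tsum_mul_left, mul_comm]
    gcongr
    refine le_trans hlow (le_of_eq ?_)
    unfold Sm
    rw [show (fun w => if F w then wt w else 0) = Set.indicator {w | F w} (fun w => wt w) by
      funext x; simp [Set.indicator]]
    rw [← tsum_subtype]
    rfl
  · rintro ⟨w, hw⟩ ⟨w', hw'⟩ hne
    rw [Function.onFun, Set.disjoint_left]
    intro ω hω hω'
    apply hne
    simp only [Subtype.mk.injEq]
    rcases le_total (w0 ++ w).length (w0 ++ w').length with hl | hl
    · obtain ⟨v, hv⟩ := Ey_disj ξ _ _ ω hω hω' hl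
      rw [List.append_assoc, List.append_cancel_left_eq] at hv
      have hv : w' = w ++ v := hv
      have := Fst_free _ _ _ _ w v hw (by rw [← hv]; exact hw')
      rw [hv, this, List.append_nil]
    · obtain ⟨v, hv⟩ := Ey_disj ξ _ _ ω hω' hω hl
      rw [List.append_assoc, List.append_cancel_left_eq] at hv
      have hv : w = w' ++ v := hv
      have := Fst_free _ _ _ _ w' v hw' (by rw [← hv]; exact hw)
      rw [hv, this, List.append_nil]
  · intro w
    exact (Ey_meas μ ξ hm hind h1 _).1

theorem Bd_mono {Ω : Type*} (ξ : ℕ → Ω → ℤ) (ω : Ω) (H0 n n' : ℕ) (h : n ≤ n')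
    (hB : Bd H0 (wd ξ ω n)) : Bd H0 (wd ξ ω n') := by
  obtain ⟨m, h1, h2, h3⟩ := hB
  refine ⟨min m n, h1, h2, ?_⟩
  rw [← wd_take ξ ω n n' h, List.take_take] at h3
  exact h3

theorem ev_union {Ω : Type*} (ξ : ℕ → Ω → ℤ) (Q : List Bool → Prop) (n : ℕ) :
    {ω | Q (wd ξ ω n)} = ⋃ w : {w : List Bool // w.length = n ∧ Q w}, Ey ξ w.1 := by
  ext ω
  simp only [Set.mem_setOf_eq, Set.mem_iUnion]
  constructor
  · intro h
    refine ⟨⟨wd ξ ω n, wd_length _ _ _, h⟩, ?_⟩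
    show wd ξ ω (wd ξ ω n).length = wd ξ ω n
    rw [wd_length]
  · rintro ⟨⟨w, h1, h2⟩, h3⟩
    have h3 : wd ξ ω w.length = w := h3
    rw [h1] at h3
    rw [h3]; exact h2

theorem ev_disj {Ω : Type*} (ξ : ℕ → Ω → ℤ) (Q : List Bool → Prop) (n : ℕ) :
    Pairwise (Function.onFun Disjoint
      (fun w : {w : List Bool // w.length = n ∧ Q w} => Ey ξ w.1)) := by
  rintro ⟨w, hw⟩ ⟨w', hw'⟩ hne
  rw [Function.onFun, Set.disjoint_left]
  intro ω hω hω'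
  apply hne
  have a1 : wd ξ ω w.length = w := hω
  have a2 : wd ξ ω w'.length = w' := hω'
  rw [hw.1] at a1
  rw [hw'.1] at a2
  simp only [Subtype.mk.injEq]
  rw [← a1, ← a2]

theorem prob_one {Ω : Type*} [MeasurableSpace Ω] (μ : Measure Ω) [IsProbabilityMeasure μ]
    (ξ : ℕ → Ω → ℤ) (hm : ∀ i, Measurable (ξ i)) (hind : iIndepFun ξ μ)
    (h1 : ∀ i, μ {ω | ξ i ω = 1} = 1 / 2) (H0 : ℕ) :
    ∀ᵐ ω ∂μ, ∃ n, Bd H0 (wd ξ ω n) := by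
  set A : Set Ω := {ω | ∃ n, Bd H0 (wd ξ ω n)} with hA
  let An : ℕ → Set Ω := fun n => {ω | Bd H0 (wd ξ ω n)}
  have hev : ∀ (Q : List Bool → Prop) n, MeasurableSet {ω | Q (wd ξ ω n)} := by
    intro Q n
    rw [ev_union]
    exact MeasurableSet.iUnion fun w => (Ey_meas μ ξ hm hind h1 _).1
  have hAn : ∀ n, MeasurableSet (An n) := fun n => hev _ n
  have hAU : A = ⋃ n, An n := by
    ext ω; simp [A, An]
  have hAm : MeasurableSet A := by rw [hAU]; exact MeasurableSet.iUnion hAn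
  have hmono : Monotone An := fun n n' h ω hω => Bd_mono ξ ω H0 n n' h hω
  have hstep : ∀ n, μ (An n) + ENNReal.ofReal c0 * μ Aᶜ ≤ μ A := by
    intro n
    have hsub : An n ⊆ A := by rw [hAU]; exact Set.subset_iUnion An n
    have e1 : (An n)ᶜ = ⋃ w : {w : List Bool // w.length = n ∧ ¬ Bd H0 w}, Ey ξ w.1 := by
      rw [← ev_union ξ (fun w => ¬ Bd H0 w) n]; rfl
    have e2 : ENNReal.ofReal c0 * μ (An n)ᶜ ≤ μ ((An n)ᶜ ∩ A) := by
      rw [e1, Set.iUnion_inter, measure_iUnion (ev_disj ξ (fun w => ¬ Bd H0 w) n)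
        (fun w => (Ey_meas μ ξ hm hind h1 _).1), measure_iUnion, ← ENNReal.tsum_mul_left]
      · apply ENNReal.tsum_le_tsum
        intro w
        rw [(Ey_meas μ ξ hm hind h1 _).2]
        exact cond_lower μ ξ hm hind h1 H0 w.1
      · intro w w' hne
        exact (ev_disj ξ (fun w => ¬ Bd H0 w) n hne).mono Set.inter_subset_left Set.inter_subset_left
      · intro w
        exact (Ey_meas μ ξ hm hind h1 _).1.inter hAm
    have e3 : μ Aᶜ ≤ μ (An n)ᶜ := measure_mono (Set.compl_subset_compl.mpr hsub)
    calc μ (An n) + ENNReal.ofReal c0 * μ Aᶜ ≤ μ (An n) + μ ((An n)ᶜ ∩ A) := by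
          gcongr
          exact le_trans (by gcongr) e2
      _ = μ (A ∩ An n) + μ (A \ An n) := by
          rw [Set.inter_eq_self_of_subset_right hsub, Set.diff_eq, Set.inter_comm]
      _ = μ A := measure_inter_add_diff A (hAn n)
  have hlim : Filter.Tendsto (fun n => μ (An n) + ENNReal.ofReal c0 * μ Aᶜ) Filter.atTop
      (nhds (μ A + ENNReal.ofReal c0 * μ Aᶜ)) := by
    apply Filter.Tendsto.add_const
    rw [hAU]
    exact tendsto_measure_iUnion_atTop hmono
  have hle := le_of_tendsto' hlim hstep
  have hz : ENNReal.ofReal c0 * μ Aᶜ = 0 := by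
    have hfin : μ A ≠ ⊤ := measure_ne_top μ A
    have : μ A + ENNReal.ofReal c0 * μ Aᶜ ≤ μ A + 0 := by simpa using hle
    have := (ENNReal.add_le_add_iff_left hfin).mp this
    exact le_antisymm this zero_le
  rcases mul_eq_zero.mp hz with h | h
  · have := ENNReal.ofReal_eq_zero.mp h
    have := c0_pos
    linarith
  · exact h

theorem walk_pos {Ω : Type*} (ξ : ℕ → Ω → ℤ) (ω : Ω) (hg : ∀ i, ξ i ω = 1 ∨ ξ i ω = -1) (t : ℕ) :
    ∑ i ∈ Finset.range t, ξ i ω = pos 0 (wd ξ ω t) := by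
  induction t with
  | zero => simp [wd, pos]
  | succ t ih =>
    rw [Finset.sum_range_succ, ih, wd_succ, pos_append]
    rcases hg t with h | h <;> simp [pos, sg, h]

theorem walk_vis {Ω : Type*} (ξ : ℕ → Ω → ℤ) (ω : Ω) (hg : ∀ i, ξ i ω = 1 ∨ ξ i ω = -1)
    (S : ℕ → Ω → ℤ) (hS : ∀ t ω, S t ω = ∑ i ∈ Finset.range t, ξ i ω) (t : ℕ) (z : ℤ) :
    ((Finset.Icc 1 t).filter fun k => S k ω = z).card = vis 0 (wd ξ ω t) z := by
  induction t with
  | zero => simp [wd, vis]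
  | succ t ih =>
    have e : Finset.Icc 1 (t + 1) = insert (t + 1) (Finset.Icc 1 t) := by
      ext k; simp only [Finset.mem_Icc, Finset.mem_insert]; omega
    have hp : S (t + 1) ω = pos 0 (wd ξ ω t) + sg (decide (ξ t ω = 1)) := by
      rw [hS, walk_pos ξ ω hg, wd_succ, pos_append]
      rfl
    rw [e, Finset.filter_insert, wd_succ, vis_append]
    split_ifs with hz
    · rw [Finset.card_insert_of_notMem (by simp), ih]
      rw [hp] at hz
      simp [vis, hz]
    · rw [ih]
      rw [hp] at hz
      simp [vis, hz]

theorem main {Ω : Type*} [MeasurableSpace Ω] (μ : Measure Ω) [IsProbabilityMeasure μ]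
    (ξ : ℕ → Ω → ℤ) (hξmeas : ∀ i, Measurable (ξ i))
    (hξindep : iIndepFun ξ μ)
    (hξ1 : ∀ i, μ {ω | ξ i ω = 1} = 1 / 2)
    (hξ2 : ∀ i, μ {ω | ξ i ω = -1} = 1 / 2)
    (S : ℕ → Ω → ℤ) (hS : ∀ t ω, S t ω = ∑ i ∈ Finset.range t, ξ i ω)
    (L : ℕ → ℤ → Ω → ℕ)
    (hL : ∀ t x ω, L t x ω = ((Finset.Icc 1 t).filter fun k => S k ω = x).card)
    (Fav : ℕ → Ω → Set ℤ)
    (hFav : ∀ t ω, Fav t ω = {y : ℤ | ∀ z : ℤ, L t z ω ≤ L t y ω}) :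
    μ {ω | {t : ℕ | (Fav t ω).encard = 3}.Infinite} = 1 := by
  have hgood : ∀ᵐ ω ∂μ, ∀ i, ξ i ω = 1 ∨ ξ i ω = -1 := by
    rw [ae_all_iff]
    intro i
    have m1 : MeasurableSet {ω | ξ i ω = 1} := hξmeas i (MeasurableSet.of_discrete (s := {1}))
    have m2 : MeasurableSet {ω | ξ i ω = -1} := hξmeas i (MeasurableSet.of_discrete (s := {-1}))
    have hd : Disjoint {ω | ξ i ω = 1} {ω | ξ i ω = -1} := by
      rw [Set.disjoint_left]
      intro ω h1 h2
      simp only [Set.mem_setOf_eq] at h1 h2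
      omega
    have hu : μ ({ω | ξ i ω = 1} ∪ {ω | ξ i ω = -1}) = 1 := by
      rw [measure_union hd m2, hξ1, hξ2]
      exact ENNReal.add_halves 1
    have := (prob_compl_eq_zero_iff (m1.union m2)).mpr hu
    exact this
  have hall : ∀ᵐ ω ∂μ, ∀ H0, ∃ n, Bd H0 (wd ξ ω n) := by
    rw [ae_all_iff]
    exact fun H0 => prob_one μ ξ hξmeas hξindep hξ1 H0
  have hfin : ∀ᵐ ω ∂μ, {t : ℕ | (Fav t ω).encard = 3}.Infinite := by
    filter_upwards [hgood, hall] with ω hg hB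
    rw [Set.infinite_iff_exists_gt]
    intro N
    obtain ⟨n, m, h, hh, hG⟩ := hB (N + 1)
    obtain ⟨t, ht⟩ : ∃ t, (wd ξ ω n).take m = wd ξ ω t := by
      rcases le_total m n with h | h
      · exact ⟨m, wd_take ξ ω m n h⟩
      · exact ⟨n, List.take_of_length_le (by rw [wd_length]; exact h)⟩
    rw [ht] at hG
    set y := pos 0 (wd ξ ω t) with hy
    have hLv : ∀ z, L t z ω = vis 0 (wd ξ ω t) z := by
      intro z; rw [hL, walk_vis ξ ω hg S hS]
    have hin : ∀ z, y - 1 ≤ z ∧ z ≤ y + 1 → L t z ω = h := by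
      intro z hz
      have := hG z
      rw [if_pos hz, zero_add] at this
      rw [hLv, this]
    have hout : ∀ z, ¬ (y - 1 ≤ z ∧ z ≤ y + 1) → L t z ω < h := by
      intro z hz
      have := hG z
      rw [if_neg hz, zero_add] at this
      rw [hLv]; exact this
    refine ⟨t, ?_, ?_⟩
    · have hF : Fav t ω = ((Finset.Icc (y - 1) (y + 1) : Finset ℤ) : Set ℤ) := by
        rw [hFav]
        ext x
        simp only [Set.mem_setOf_eq, Finset.coe_Icc, Set.mem_Icc]
        constructor
        · intro hx
          by_contra hcon
          have h1 := hout x hcon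
          have h2 := hx y
          rw [hin y (by omega)] at h2
          omega
        · intro hx z
          rw [hin x hx]
          by_cases hz : y - 1 ≤ z ∧ z ≤ y + 1
          · exact (hin z hz).le
          · exact (hout z hz).le
      show (Fav t ω).encard = 3
      rw [hF, Set.encard_coe_eq_coe_finsetCard, Int.card_Icc,
        show y + 1 + 1 - (y - 1) = 3 by ring]
      rfl
    · have h1 := vis_le_length 0 (wd ξ ω t) y
      rw [wd_length, ← hLv, hin y (by omega)] at h1
      omega
  rw [measure_congr (Filter.eventuallyEq_univ.mpr hfin), measure_univ]

end Fav3


end FavPart8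


open MeasureTheory ProbabilityTheory

/-- For one-dimensional simple random walk, with probability 1 there are
infinitely many times `t` at which there are exactly three favorite sites. -/
theorem three_favorite_sites_infinitely_often
    {Ω : Type*} [MeasurableSpace Ω] (μ : Measure Ω) [IsProbabilityMeasure μ]
    -- i.i.d. steps, each uniform on {−1, 1}
    (ξ : ℕ → Ω → ℤ) (hξmeas : ∀ i, Measurable (ξ i))
    (hξindep : iIndepFun ξ μ)
    (hξ1 : ∀ i, μ {ω | ξ i ω = 1} = 1 / 2)
    (hξ2 : ∀ i, μ {ω | ξ i ω = -1} = 1 / 2)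
    -- the simple random walk
    (S : ℕ → Ω → ℤ) (hS : ∀ t ω, S t ω = ∑ i ∈ Finset.range t, ξ i ω)
    -- local times
    (L : ℕ → ℤ → Ω → ℕ)
    (hL : ∀ t x ω, L t x ω = ((Finset.Icc 1 t).filter fun k => S k ω = x).card)
    -- favorite (most visited) sites
    (Fav : ℕ → Ω → Set ℤ)
    (hFav : ∀ t ω, Fav t ω = {y : ℤ | ∀ z : ℤ, L t z ω ≤ L t y ω}) :
    μ {ω | {t : ℕ | (Fav t ω).encard = 3}.Infinite} = 1 := by
  exact Fav3.main μ ξ hξmeas hξindep hξ1 hξ2 S hS L hL Fav hFav
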